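/- arXiv:1612.07227 — 2 statements merged into one kernel-verified Lean document; each statement's English description precedes it below -/
import Mathlib

section
/- Let G be a group with generating set X such that the Cayley graph Γ(G,X) is hyperbolic, and let H_1,…,H_l be subgroups of G of infinite index, each hyperbolically embedded in (G,X), with at least one H_j infinite (so that G is acylindrically hyperbolic), and suppose G has a finite normal subgroup containing every finite normal subgroup of G. Then there exists a homogeneous quasimorphism q : G → ℝ which is not a group homomorphism and which vanishes identically on each H_i. (Equivalently, the product of the restriction maps EH²_b(G,ℝ) → ∏_{i=1}^l EH²_b(H_i,ℝ) on exact bounded cohomology is not injective.) -/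
open Pointwise

section BasicDefs

variable {G : Type*} [Group G]

/-- The word length of `g` with respect to the generating set `S`
(words use letters from `S ∪ S⁻¹`). -/
noncomputable def wordLength (S : Set G) (g : G) : ℕ :=
  sInf {n : ℕ | ∃ l : List G, l.length = n ∧ (∀ x ∈ l, x ∈ S ∨ x⁻¹ ∈ S) ∧ l.prod = g}

/-- The word metric on `G` with respect to the generating set `S`. -/
noncomputable def wordDist (S : Set G) (g h : G) : ℝ :=
  (wordLength S (g⁻¹ * h) : ℝ)

/-- The closed `r`-neighborhood of a subset `A` with respect to the word metric `d_S`. -/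
def nbhd (S : Set G) (r : ℝ) (A : Set G) : Set G :=
  {g : G | ∃ a ∈ A, wordDist S g a ≤ r}

/-- The distance between two subsets: the infimum of distances between their elements. -/
noncomputable def setDist (S : Set G) (A B : Set G) : ℝ :=
  sInf {r : ℝ | ∃ a ∈ A, ∃ b ∈ B, r = wordDist S a b}

/-- The conjugate subgroup `H^g = g H g⁻¹`. -/
def conjSub (g : G) (H : Subgroup G) : Subgroup G :=
  H.map (MulAut.conj g).toMonoidHom

end BasicDefs

/-- `γ` restricted to `{0, …, n}` is a `(K, ε)`-quasigeodesic for the distance function `d`. -/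
def IsQuasigeodesic {α : Type*} (d : α → α → ℝ) (K ε : ℝ) (n : ℕ) (γ : ℕ → α) : Prop :=
  ∀ i j : ℕ, i ≤ n → j ≤ n →
    (1 / K) * |(i : ℝ) - (j : ℝ)| - ε ≤ d (γ i) (γ j) ∧
      d (γ i) (γ j) ≤ K * |(i : ℝ) - (j : ℝ)| + ε

/-- `γ` restricted to `{0, …, n}` is a geodesic for the distance function `d`. -/
def IsGeodesic {α : Type*} (d : α → α → ℝ) (n : ℕ) (γ : ℕ → α) : Prop :=
  ∀ i j : ℕ, i ≤ n → j ≤ n → d (γ i) (γ j) = |(i : ℝ) - (j : ℝ)|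

/-- The path `γ` (on `{0, …, n}`) is `f`-stable: every `(K, ε)`-quasigeodesic with endpoints
on `γ` stays in the `f K ε`-neighborhood of `γ`. -/
def IsStablePath {α : Type*} (d : α → α → ℝ) (f : ℝ → ℝ → ℝ) (n : ℕ) (γ : ℕ → α) : Prop :=
  ∀ K ε : ℝ, 1 ≤ K → 0 ≤ ε → ∀ (m : ℕ) (η : ℕ → α),
    IsQuasigeodesic d K ε m η →
    (∃ i ≤ n, η 0 = γ i) → (∃ i ≤ n, η m = γ i) →
    ∀ j ≤ m, ∃ i ≤ n, d (η j) (γ i) ≤ f K ε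

/-- The Gromov product `⟨x, y⟩_w` with respect to a distance function `d`. -/
noncomputable def gromovProd {α : Type*} (d : α → α → ℝ) (w x y : α) : ℝ :=
  (d w x + d w y - d x y) / 2

/-- Gromov hyperbolicity of a distance function, via the four-point condition. -/
def IsHyperbolicDist {α : Type*} (d : α → α → ℝ) : Prop :=
  ∃ δ : ℝ, 0 ≤ δ ∧ ∀ w x y z : α,
    min (gromovProd d w x y) (gromovProd d w y z) - δ ≤ gromovProd d w x z

section GroupDefs

variable {G : Type*} [Group G]

/-- `H` is a stable subgroup of `(G, d_S)` with stability function `f`: `H` has a finite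
generating set `T` such that the inclusion `(H, d_T) → (G, d_S)` is a quasi-isometric
embedding sending every `d_T`-geodesic to an `f`-stable quasigeodesic of `(G, d_S)`. -/
def IsStableSubgroupWith (S : Set G) (H : Subgroup G) (f : ℝ → ℝ → ℝ) : Prop :=
  ∃ T : Set H, T.Finite ∧ Subgroup.closure T = ⊤ ∧
    (∃ μ c : ℝ, 1 ≤ μ ∧ 0 ≤ c ∧ ∀ h₁ h₂ : H,
      (1 / μ) * wordDist T h₁ h₂ - c ≤ wordDist S (h₁ : G) (h₂ : G) ∧
        wordDist S (h₁ : G) (h₂ : G) ≤ μ * wordDist T h₁ h₂ + c) ∧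
    ∀ (n : ℕ) (γ : ℕ → H), IsGeodesic (wordDist T) n γ →
      (∃ K ε : ℝ, 1 ≤ K ∧ 0 ≤ ε ∧
        IsQuasigeodesic (wordDist S) K ε n (fun i => (γ i : G))) ∧
      IsStablePath (wordDist S) f n (fun i => (γ i : G))

/-- `H` is a stable subgroup of `(G, d_S)`. -/
def IsStableSubgroup (S : Set G) (H : Subgroup G) : Prop :=
  ∃ f : ℝ → ℝ → ℝ, IsStableSubgroupWith S H f

/-- The family `Q` of subgroups is hyperbolically embedded in `(G, X)`:
(Q1) geometric separation, (Q2) finite generation, (Q3) uniform quasi-isometric embedding. -/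
def IsHypEmbFamily {G : Type*} [Group G] {ι : Type*} (X : Set G) (Q : ι → Subgroup G) : Prop :=
  (∀ ε : ℝ, 0 < ε → ∃ R : ℝ, ∀ (g : G) (i j : ι),
      (∃ a ∈ (Q i : Set G) ∩ nbhd X ε (g • (Q j : Set G)),
        ∃ b ∈ (Q i : Set G) ∩ nbhd X ε (g • (Q j : Set G)), R ≤ wordDist X a b) →
      i = j ∧ g ∈ Q i) ∧
  ∃ Y : ι → Set G, (∀ i, (Y i).Finite ∧ Y i ⊆ (Q i : Set G) ∧ Subgroup.closure (Y i) = Q i) ∧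
    ∃ μ c : ℝ, 1 ≤ μ ∧ 0 ≤ c ∧ ∀ i : ι, ∀ h ∈ Q i,
      (wordLength (Y i) h : ℝ) ≤ μ * (wordLength X h : ℝ) + c

/-- The subset `H` of `G` satisfies the WPD condition in `(G, X)`. -/
def WPDSet (X : Set G) (H : Set G) : Prop :=
  ∀ ε : ℝ, 0 < ε → ∃ N : ℝ, 0 < N ∧ ∀ h₁ h₂ : G, h₁ ∈ H → h₂ ∈ H →
    N < wordDist X h₁ h₂ →
    {g : G | wordDist X h₁ (g * h₁) < ε ∧ wordDist X h₂ (g * h₂) < ε}.Finite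

/-- A quasimorphism on `G`. -/
def IsQuasimorphism (q : G → ℝ) : Prop :=
  ∃ D : ℝ, 0 ≤ D ∧ ∀ x y : G, |q (x * y) - q x - q y| ≤ D

/-- A homogeneous quasimorphism on `G`. -/
def IsHomogeneousQM (q : G → ℝ) : Prop :=
  IsQuasimorphism q ∧ ∀ (x : G) (n : ℕ), q (x ^ n) = (n : ℝ) * q x

/-- `H` is a quasiconvex subgroup of `(G, d_S)`: every geodesic with endpoints in `H`
lies in a uniformly bounded neighborhood of `H`. -/
def IsQuasiconvex (S : Set G) (H : Subgroup G) : Prop :=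
  ∃ C : ℝ, 0 ≤ C ∧ ∀ (n : ℕ) (γ : ℕ → G), IsGeodesic (wordDist S) n γ →
    γ 0 ∈ H → γ n ∈ H → ∀ i ≤ n, ∃ h ∈ H, wordDist S (γ i) h ≤ C

end GroupDefs

/-! ### Abstract geometry of a left-invariant hyperbolic graph metric -/

structure GeoMetric {G : Type*} [Group G] (d : G → G → ℕ) (Δ : ℕ) : Prop where
  self : ∀ x, d x x = 0
  symm : ∀ x y, d x y = d y x
  tri : ∀ x y z, d x z ≤ d x y + d y z
  inv : ∀ a x y, d (a * x) (a * y) = d x y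
  geod : ∀ x y s, s ≤ d x y → ∃ p, d x p = s ∧ d x p + d p y = d x y
  hyp : ∀ x y z w, d x z + d y w ≤ d x y + d z w + Δ ∨ d x z + d y w ≤ d x w + d y z + Δ
  pos : 1 ≤ Δ

structure HypEmb {G : Type*} [Group G] (d : G → G → ℕ) (H : Subgroup G) : Prop where
  qc : ∃ κ, ∀ h ∈ H, ∀ p, d 1 p + d p h = d 1 h → ∃ k ∈ H, d p k ≤ κ
  sep : ∀ r, ∃ R, ∀ g a b a' b', a ∈ H → b ∈ H → a' ∈ H → b' ∈ H →
    d a (g * a') ≤ r → d b (g * b') ≤ r → R ≤ d a b → g ∈ H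
  fin : ∀ n, {h | h ∈ H ∧ d 1 h ≤ n}.Finite

/-- `p` lies within `r` of the coset `aH`. -/
def NearCoset {G : Type*} [Group G] (d : G → G → ℕ) (H : Subgroup G) (r : ℕ) (p a : G) : Prop :=
  ∃ k ∈ H, d p (a * k) ≤ r

namespace GeoMetric

variable {G : Type*} [Group G] {d : G → G → ℕ} {Δ : ℕ}

theorem fellow (g : GeoMetric d Δ) {x y m p : G} {a b e : ℕ}
    (h1 : d x m + d m y ≤ d x y + a) (h2 : d x p + d p y ≤ d x y + b)
    (h3 : d x m ≤ d x p + e) (h4 : d x p ≤ d x m + e) : d m p ≤ a + b + e + Δ := by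
  have h := g.hyp x m y p
  have := g.symm y p
  have := g.symm y m
  have := g.symm m y
  omega

theorem step (g : GeoMetric d Δ) {x u v y : G} {a b : ℕ}
    (h1 : d x u + d u v ≤ d x v + a) (h2 : d u v + d v y ≤ d u y + b)
    (h3 : a + b + Δ < 2 * d u v) :
    d x v + d v y ≤ d x y + b + Δ ∧ d x u + d u y ≤ d x y + a + Δ ∧
      d x u + d u v + d v y ≤ d x y + a + b + Δ := by
  have h := g.hyp x u v y
  omega

theorem inv_one (g : GeoMetric d Δ) (a x : G) : d a (a * x) = d 1 x := by
  have := g.inv a 1 x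
  rwa [mul_one] at this

theorem inv' (g : GeoMetric d Δ) (a x y : G) : d (a⁻¹ * x) y = d x (a * y) := by
  have := g.inv a (a⁻¹ * x) y
  rw [← this]; simp

theorem tri3 (g : GeoMetric d Δ) (x y z w : G) : d x w ≤ d x y + d y z + d z w := by
  have := g.tri x y w
  have := g.tri y z w
  omega

end GeoMetric

section near

variable {G : Type*} [Group G] {d : G → G → ℕ} {Δ : ℕ} {H : Subgroup G}

theorem NearCoset.mono {r s : ℕ} (h : r ≤ s) {p a : G} (hp : NearCoset d H r p a) :
    NearCoset d H s p a := by
  obtain ⟨k, hk, h'⟩ := hp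
  exact ⟨k, hk, h'.trans h⟩

theorem NearCoset.move (g : GeoMetric d Δ) {r e : ℕ} {p q a : G} (hp : NearCoset d H r p a)
    (h : d q p ≤ e) : NearCoset d H (r + e) q a := by
  obtain ⟨k, hk, h'⟩ := hp
  refine ⟨k, hk, ?_⟩
  have := g.tri q p (a * k)
  omega

theorem NearCoset.translate (g : GeoMetric d Δ) {r : ℕ} {p a : G} (b : G)
    (hp : NearCoset d H r p a) : NearCoset d H r (b * p) (b * a) := by
  obtain ⟨k, hk, h'⟩ := hp
  refine ⟨k, hk, ?_⟩
  rw [mul_assoc, g.inv]; exact h'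

/-- Points coarsely between two points of a coset are near this coset. -/
theorem HypEmb.qc' (g : GeoMetric d Δ) (hH : HypEmb d H) (e : ℕ) :
    ∃ κ, ∀ a u v p, a⁻¹ * u ∈ H → a⁻¹ * v ∈ H → d u p + d p v ≤ d u v + e →
      NearCoset d H κ p a := by
  obtain ⟨κ, hκ⟩ := hH.qc
  refine ⟨κ + (2 * e + Δ), fun a u v p hu hv hp => ?_⟩
  obtain ⟨p', h1, h2⟩ := g.geod u v (min (d u p) (d u v)) (min_le_right _ _)
  have hpp : d p p' ≤ 2 * e + Δ := by
    have := g.fellow (x := u) (y := v) (m := p) (p := p') (a := e) (b := 0) (e := e) hp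
      (by omega) (by omega) (by omega)
    omega
  have hh : u⁻¹ * v ∈ H := by
    have := H.mul_mem (H.inv_mem hu) hv
    simpa [mul_assoc] using this
  obtain ⟨k, hk, hd⟩ := hκ (u⁻¹ * v) hh (u⁻¹ * p') (by
    have e1 := g.inv u 1 (u⁻¹ * p')
    have e2 := g.inv u (u⁻¹ * p') (u⁻¹ * v)
    have e3 := g.inv u 1 (u⁻¹ * v)
    simp only [mul_inv_cancel_left, mul_one] at e1 e2 e3
    omega)
  refine NearCoset.move g (p := p') ⟨a⁻¹ * u * k, H.mul_mem hu hk, ?_⟩ hpp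
  rw [g.inv'] at hd
  simpa [mul_assoc] using hd

/-- Two cosets which are both near to two far apart points coincide. -/
theorem HypEmb.sep' (g : GeoMetric d Δ) (hH : HypEmb d H) (r : ℕ) :
    ∃ R, ∀ a b p q, NearCoset d H r p a → NearCoset d H r q a → NearCoset d H r p b →
      NearCoset d H r q b → R ≤ d p q → a⁻¹ * b ∈ H := by
  obtain ⟨R, hR⟩ := hH.sep (2 * r)
  refine ⟨R + 2 * r, fun a b p q => ?_⟩
  rintro ⟨k1, hk1, e1⟩ ⟨k2, hk2, e2⟩ ⟨k3, hk3, e3⟩ ⟨k4, hk4, e4⟩ hpq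
  refine hR (a⁻¹ * b) k1 k2 k3 k4 hk1 hk2 hk3 hk4 ?_ ?_ ?_
  · rw [g.symm, mul_assoc, g.inv']
    have := g.tri (b * k3) p (a * k1)
    have := g.symm p (b * k3)
    omega
  · rw [g.symm, mul_assoc, g.inv']
    have := g.tri (b * k4) q (a * k2)
    have := g.symm q (b * k4)
    omega
  · rw [← g.inv a]
    have := g.tri3 p (a * k1) (a * k2) q
    have := g.symm q (a * k2)
    omega

/-- Bounded Gromov products at joints. -/
theorem HypEmb.joint (g : GeoMetric d Δ) (hH : HypEmb d H) (t : G) (ht : t ∉ H) :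
    ∃ c, ∀ h ∈ H, ∀ h' ∈ H, d 1 h + d h (h * t * h') ≤ d 1 (h * t * h') + c := by
  obtain ⟨κ, hκ⟩ := hH.qc' g (Δ + 2 * d 1 t + 1)
  obtain ⟨R, hR⟩ := hH.sep' g (κ + d 1 t)
  refine ⟨2 * R + 2, fun h hh h' hh' => ?_⟩
  by_contra hcon
  push Not at hcon
  set z := h * t * h' with hz
  have ts1 := g.tri 1 z h
  have ts2 := g.tri h 1 z
  have ts3 := g.symm z h
  have ts4 := g.symm h 1
  have ts5 := g.symm z 1
  obtain ⟨p, hp1, hp2⟩ := g.geod h 1 ((d 1 h + d h z - d 1 z) / 2) (by omega)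
  have hq := g.hyp p h z 1
  have ts6 := g.symm p h
  have hpz : d h p + d p z ≤ d h z + Δ + 1 := by omega
  have hht : d (h * t) h = d 1 t := by rw [g.symm, g.inv_one]
  have a1 := g.tri (h * t) h p
  have a2 := g.tri h (h * t) z
  have a3 := g.symm h (h * t)
  have n1 : NearCoset d H (κ + d 1 t) p (h * t) :=
    (hκ (h * t) (h * t) z p (by simp [H.one_mem]) (by simp [hz, mul_assoc, hh'])
      (by omega)).mono (by omega)
  have n2 : NearCoset d H (κ + d 1 t) p 1 :=
    (hκ 1 h 1 p (by simpa using hh) (by simp [H.one_mem]) (by omega)).mono (by omega)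
  have n3 : NearCoset d H (κ + d 1 t) h 1 := ⟨h, hh, by rw [one_mul, g.self]; omega⟩
  have n4 : NearCoset d H (κ + d 1 t) h (h * t) := ⟨1, H.one_mem, by rw [mul_one]; omega⟩
  have := hR 1 (h * t) h p n3 n2 n4 n1 (by omega)
  rw [inv_one, one_mul] at this
  exact ht ((H.mul_mem_cancel_left hh).1 this)

end near

/-! ### The discounted length (Epstein–Fujiwara) -/

section disc

variable {G : Type*} [Group G] (d : G → G → ℕ) (w : G) (K : ℕ)

/-- Cost of the path from `x` to `y` using the discounted letter `w` at the listed places. -/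
def pathCost (x : G) : List G → G → ℕ
  | [], y => d x y
  | g :: L, y => d x g + K + pathCost (g * w) L y

/-- Discounted length. -/
noncomputable def discDist (x y : G) : ℕ := sInf (Set.range fun L => pathCost d w K x L y)

theorem discDist_exists (x y : G) : ∃ L, pathCost d w K x L y = discDist d w K x y := by
  have : (Set.range fun L => pathCost d w K x L y).Nonempty := Set.range_nonempty _
  exact Nat.sInf_mem this

theorem discDist_le (x y : G) (L : List G) : discDist d w K x y ≤ pathCost d w K x L y :=
  Nat.sInf_le ⟨L, rfl⟩

theorem discDist_le_dist (x y : G) : discDist d w K x y ≤ d x y := discDist_le d w K x y []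

theorem pathCost_concat (x y : G) (L : List G) (g : G) :
    pathCost d w K x (L ++ [g]) y = pathCost d w K x L g + K + d (g * w) y := by
  induction L generalizing x with
  | nil => simp [pathCost]
  | cons a L ih => simp only [List.cons_append, pathCost, ih]; omega

variable {d w K} {Δ : ℕ}

theorem pathCost_tri (hg : GeoMetric d Δ) (x y z : G) (L : List G) :
    pathCost d w K x L z ≤ d x y + pathCost d w K y L z := by
  cases L with
  | nil => exact hg.tri x y z
  | cons a L =>
    simp only [pathCost]
    have := hg.tri x y a
    omega

theorem pathCost_append (hg : GeoMetric d Δ) (x y z : G) (L M : List G) :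
    pathCost d w K x (L ++ M) z ≤ pathCost d w K x L y + pathCost d w K y M z := by
  induction L generalizing x with
  | nil => exact pathCost_tri hg x y z M
  | cons a L ih =>
    simp only [List.cons_append, pathCost]
    have := ih (a * w)
    omega

theorem pathCost_inv (hg : GeoMetric d Δ) (a x y : G) (L : List G) :
    pathCost d w K (a * x) (L.map (a * ·)) (a * y) = pathCost d w K x L y := by
  induction L generalizing x with
  | nil => exact hg.inv a x y
  | cons b L ih => simp only [List.map_cons, pathCost, hg.inv, mul_assoc, ih]

theorem discDist_inv (hg : GeoMetric d Δ) (a x y : G) :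
    discDist d w K (a * x) (a * y) = discDist d w K x y := by
  apply le_antisymm
  · obtain ⟨L, hL⟩ := discDist_exists d w K x y
    rw [← hL, ← pathCost_inv hg a]
    exact discDist_le _ _ _ _ _ _
  · obtain ⟨L, hL⟩ := discDist_exists d w K (a * x) (a * y)
    rw [← hL, ← pathCost_inv hg a⁻¹]
    simp only [inv_mul_cancel_left]
    exact discDist_le _ _ _ _ _ _

theorem discDist_tri (hg : GeoMetric d Δ) (x y z : G) :
    discDist d w K x z ≤ discDist d w K x y + discDist d w K y z := by
  obtain ⟨L, hL⟩ := discDist_exists d w K x y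
  obtain ⟨M, hM⟩ := discDist_exists d w K y z
  have := pathCost_append (w := w) (K := K) hg x y z L M
  have := discDist_le d w K x z (L ++ M)
  omega

theorem discDist_jump (hg : GeoMetric d Δ) (g : G) : discDist d w K g (g * w) ≤ K := by
  have := discDist_le d w K g (g * w) [g]
  simpa [pathCost, hg.self] using this

theorem discDist_via (hg : GeoMetric d Δ) (x y g : G) :
    discDist d w K x y ≤ discDist d w K x g + K + discDist d w K (g * w) y := by
  have := discDist_tri (w := w) (K := K) hg x g y
  have := discDist_tri (w := w) (K := K) hg g (g * w) y
  have := discDist_jump (w := w) (K := K) hg g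
  omega

theorem discDist_left (hg : GeoMetric d Δ) (x y : G) : discDist d w K x y = d x y ∨
    ∃ g, discDist d w K x y = d x g + K + discDist d w K (g * w) y ∧
      discDist d w K x g = d x g := by
  obtain ⟨L, hL⟩ := discDist_exists d w K x y
  cases L with
  | nil => left; rw [← hL]; rfl
  | cons g L =>
    right
    refine ⟨g, ?_⟩
    simp only [pathCost] at hL
    have := discDist_via (w := w) (K := K) hg x y g
    have := discDist_le_dist d w K x g
    have := discDist_le d w K (g * w) y L
    omega

theorem discDist_right (hg : GeoMetric d Δ) (x y : G) : discDist d w K x y = d x y ∨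
    ∃ g, discDist d w K x y = discDist d w K x g + K + d (g * w) y ∧
      discDist d w K (g * w) y = d (g * w) y := by
  obtain ⟨L, hL⟩ := discDist_exists d w K x y
  rcases List.eq_nil_or_concat L with rfl | ⟨L, g, rfl⟩
  · left; rw [← hL]; rfl
  · right
    refine ⟨g, ?_⟩
    simp only [pathCost_concat, List.concat_eq_append] at hL
    have := discDist_via (w := w) (K := K) hg x y g
    have := discDist_le_dist d w K (g * w) y
    have := discDist_le d w K x g L
    omega

variable {C : ℕ}

theorem disc_first (hg : GeoMetric d Δ) (hw : d 1 w = K + C) (hK : 2 * C + 2 * Δ < K) (n : ℕ) :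
    ∀ x y g, discDist d w K (g * w) y ≤ n →
      discDist d w K x y = d x g + K + discDist d w K (g * w) y →
      d x (g * w) + d (g * w) y ≤ d x y + (2 * C + Δ) := by
  induction n using Nat.strong_induction_on with
  | _ n ih =>
  intro x y g hn h
  have hgw : d g (g * w) = K + C := by rw [hg.inv_one, hw]
  have t1 := hg.tri x g (g * w)
  have t2 := discDist_le_dist d w K x y
  rcases discDist_left (w := w) (K := K) hg (g * w) y with h1 | ⟨g', h1, -⟩
  · omega
  · have hgw' : d g' (g' * w) = K + C := by rw [hg.inv_one, hw]
    have i := ih (discDist d w K (g' * w) y) (by omega) (g * w) y g' le_rfl h1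
    have t3 := hg.tri (g * w) g' (g' * w)
    have t4 := discDist_tri (w := w) (K := K) hg x (g' * w) y
    have t5 := discDist_le_dist d w K x (g' * w)
    have t6 := discDist_tri (w := w) (K := K) hg (g * w) (g' * w) y
    have t7 := discDist_le_dist d w K (g * w) (g' * w)
    have := hg.step (x := x) (u := g * w) (v := g' * w) (y := y) (a := 2 * C) (b := 2 * C + Δ)
      (by omega) (by omega) (by omega)
    omega

theorem disc_last (hg : GeoMetric d Δ) (hw : d 1 w = K + C) (hK : 2 * C + 2 * Δ < K) (n : ℕ) :
    ∀ x y g, discDist d w K x g ≤ n →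
      discDist d w K x y = discDist d w K x g + K + d (g * w) y →
      d x g + d g y ≤ d x y + (2 * C + Δ) := by
  induction n using Nat.strong_induction_on with
  | _ n ih =>
  intro x y g hn h
  have hgw : d g (g * w) = K + C := by rw [hg.inv_one, hw]
  have t1 := hg.tri g (g * w) y
  have t2 := discDist_le_dist d w K x y
  rcases discDist_right (w := w) (K := K) hg x g with h1 | ⟨g', h1, -⟩
  · omega
  · have hgw' : d g' (g' * w) = K + C := by rw [hg.inv_one, hw]
    have i := ih (discDist d w K x g') (by omega) x g g' le_rfl h1
    have t3 := hg.tri g' (g' * w) g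
    have t4 := discDist_tri (w := w) (K := K) hg x g' y
    have t5 := discDist_le_dist d w K g' y
    have t6 := discDist_tri (w := w) (K := K) hg x g' g
    have t7 := discDist_le_dist d w K g' g
    have := hg.step (x := x) (u := g') (v := g) (y := y) (a := 2 * C + Δ) (b := 2 * C)
      (by omega) (by omega) (by omega)
    omega

theorem disc_mid (hg : GeoMetric d Δ) (hw : d 1 w = K + C) (hK : 2 * C + 2 * Δ < K) {x y g : G}
    (h : discDist d w K x y = discDist d w K x g + K + discDist d w K (g * w) y) :
    d x (g * w) + d (g * w) y ≤ d x y + (2 * C + 2 * Δ) := by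
  have hgw : d g (g * w) = K + C := by rw [hg.inv_one, hw]
  have s1 := hg.self g
  have s2 := hg.self (g * w)
  have t1 := discDist_tri (w := w) (K := K) hg x g y
  have t2 := discDist_tri (w := w) (K := K) hg x (g * w) y
  have t3 := discDist_via (w := w) (K := K) hg g y g
  have t4 := discDist_via (w := w) (K := K) hg x (g * w) g
  have t5 := discDist_le_dist d w K g g
  have t6 := discDist_le_dist d w K (g * w) (g * w)
  have f := disc_first hg hw hK _ g y g le_rfl (by omega)
  have l := disc_last hg hw hK _ x (g * w) g le_rfl (by omega)
  have := hg.step (x := x) (u := g) (v := g * w) (y := y) (a := 2 * C + Δ) (b := 2 * C + Δ)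
      (by omega) (by omega) (by omega)
  omega

/-- If a discount is used then a translate of `w` lies straight between `x` and `y`. -/
theorem disc_straight (hg : GeoMetric d Δ) (hw : d 1 w = K + C) (hK : 2 * C + 2 * Δ < K) {x y : G}
    (h : discDist d w K x y ≠ d x y) :
    ∃ g, d x g + d g (g * w) + d (g * w) y ≤ d x y + (3 * C + Δ) := by
  rcases discDist_left (w := w) (K := K) hg x y with h1 | ⟨g, h1, h2⟩
  · exact absurd h1 h
  · refine ⟨g, ?_⟩
    have hgw : d g (g * w) = K + C := by rw [hg.inv_one, hw]
    have f := disc_first hg hw hK _ x y g le_rfl h1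
    have t2 := discDist_tri (w := w) (K := K) hg x (g * w) y
    have t5 := discDist_le_dist d w K x (g * w)
    omega

/-- Optimal paths pass near points which are coarsely between the endpoints. -/
theorem disc_center (hg : GeoMetric d Δ) (hw : d 1 w = K + C) (hK : 2 * C + 2 * Δ < K) (c : ℕ) :
    ∃ E, ∀ x y m, d x m + d m y ≤ d x y + c →
      discDist d w K x m + discDist d w K m y ≤ discDist d w K x y + E := by
  refine ⟨2 * (100 * (c + C + Δ + K)), fun x y m hm => ?_⟩
  suffices hs : ∃ p, discDist d w K x p + discDist d w K p y ≤ discDist d w K x y ∧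
      d p m ≤ 100 * (c + C + Δ + K) by
    obtain ⟨p, hp1, hp2⟩ := hs
    have t1 := discDist_tri (w := w) (K := K) hg x p m
    have t2 := discDist_tri (w := w) (K := K) hg m p y
    have t3 := discDist_le_dist d w K p m
    have t4 := discDist_le_dist d w K m p
    have t5 := hg.symm p m
    omega
  -- the last break point before `m`
  have hb : ∃ b, discDist d w K x b + discDist d w K b y = discDist d w K x y ∧
      d x b + d b y ≤ d x y + (2 * C + 2 * Δ) ∧ d x b ≤ d x m ∧
      ∀ g', discDist d w K b y = d b g' + K + discDist d w K (g' * w) y →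
        d x m ≤ d x (g' * w) := by
    set S : Set ℕ := {n | ∃ b, n = discDist d w K x b ∧
      discDist d w K x b + discDist d w K b y = discDist d w K x y ∧
      d x b + d b y ≤ d x y + (2 * C + 2 * Δ) ∧ d x b ≤ d x m} with hS
    have s1 := hg.self x
    have s2 := discDist_le_dist d w K x x
    have hne : S.Nonempty := ⟨discDist d w K x x, x, rfl, by omega, by omega, by omega⟩
    have hbd : BddAbove S := by
      refine ⟨discDist d w K x y, ?_⟩
      rintro n ⟨b, rfl, h, -⟩
      omega
    obtain ⟨b, hb0, hb1, hb2, hb3⟩ := Nat.sSup_mem hne hbd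
    refine ⟨b, hb1, hb2, hb3, fun g' hg' => ?_⟩
    by_contra hcon
    push Not at hcon
    have t0 := discDist_tri (w := w) (K := K) hg x b g'
    have t1 := discDist_le_dist d w K b g'
    have t2 := discDist_via (w := w) (K := K) hg x y g'
    have m1 := disc_mid (x := x) (y := y) (g := g') hg hw hK (by omega)
    have t3 := discDist_tri (w := w) (K := K) hg x g' (g' * w)
    have t4 := discDist_jump (w := w) (K := K) hg g'
    have t5 := discDist_tri (w := w) (K := K) hg x (g' * w) y
    have hmem : discDist d w K x (g' * w) ∈ S := ⟨g' * w, rfl, by omega, m1, by omega⟩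
    have := le_csSup hbd hmem
    omega
  obtain ⟨b, hb1, hb2, hb3, hb4⟩ := hb
  rcases discDist_left (w := w) (K := K) hg b y with h1 | ⟨g', h1, h2⟩
  · obtain ⟨p, hp1, hp2⟩ := hg.geod b y (min (d x m - d x b) (d b y)) (min_le_right _ _)
    have t1 := discDist_tri (w := w) (K := K) hg x b p
    have t2 := discDist_le_dist d w K b p
    have t3 := discDist_le_dist d w K p y
    refine ⟨p, by omega, ?_⟩
    have t4 := hg.tri x b p
    have t5 := hg.tri x p y
    have := hg.fellow (x := x) (y := y) (m := p) (p := m) (a := 2 * C + 2 * Δ) (b := c)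
      (e := 2 * C + 2 * Δ + c) (by omega) hm (by omega) (by omega)
    omega
  · have hgw : d g' (g' * w) = K + C := by rw [hg.inv_one, hw]
    have h4 := hb4 g' h1
    have f := disc_first hg hw hK _ b y g' le_rfl h1
    obtain ⟨p, hp1, hp2⟩ := hg.geod b g' (min (d x m - d x b) (d b g')) (min_le_right _ _)
    have t1 := discDist_tri (w := w) (K := K) hg x b p
    have t2 := discDist_le_dist d w K b p
    have t3 := discDist_le_dist d w K p g'
    have t4 := discDist_via (w := w) (K := K) hg p y g'
    refine ⟨p, by omega, ?_⟩
    have u1 := discDist_tri (w := w) (K := K) hg b (g' * w) y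
    have u2 := discDist_le_dist d w K b (g' * w)
    have t4 := hg.tri x b p
    have t6 := hg.tri p g' y
    have t7 := hg.tri g' (g' * w) y
    have t8 := hg.tri x p y
    have t9 := hg.tri x b g'
    have t10 := hg.tri x g' (g' * w)
    have t11 := hg.tri x p g'
    have := hg.fellow (x := x) (y := y) (m := p) (p := m) (a := 10 * (C + Δ)) (b := c)
      (e := 10 * (C + Δ + K + c)) (by omega) hm (by omega) (by omega)
    omega

end disc

/-! ### The counting quasimorphism and homogenization -/

section qm

variable {G : Type*} [Group G] {d : G → G → ℕ} {w : G} {K Δ C : ℕ}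

theorem GeoMetric.center (hg : GeoMetric d Δ) (a b c : G) : ∃ m,
    d a m + d m b ≤ d a b + (Δ + 2) ∧ d a m + d m c ≤ d a c + (Δ + 2) ∧
      d b m + d m c ≤ d b c + (Δ + 2) := by
  have t1 := hg.tri a b c
  have t2 := hg.tri a c b
  have t3 := hg.tri b a c
  have s1 := hg.symm b c
  have s2 := hg.symm b a
  obtain ⟨m, h1, h2⟩ := hg.geod a b ((d a b + d a c - d b c) / 2) (by omega)
  have s3 := hg.symm m b
  have s4 := hg.symm m c
  refine ⟨m, by omega, ?_, ?_⟩ <;>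
  · rcases hg.hyp a c b m with h | h <;> omega

/-- The Epstein–Fujiwara quasimorphism. -/
noncomputable def discQM (d : G → G → ℕ) (w : G) (K : ℕ) (g : G) : ℝ :=
  (discDist d w K 1 g : ℝ) - discDist d w K 1 g⁻¹

theorem discQM_isQM (hg : GeoMetric d Δ) (hw : d 1 w = K + C) (hK : 2 * C + 2 * Δ < K) :
    IsQuasimorphism (discQM d w K) := by
  obtain ⟨E, hE⟩ := disc_center hg hw hK (Δ + 2)
  refine ⟨6 * E, by positivity, fun x y => ?_⟩
  obtain ⟨m, h1, h2, h3⟩ := hg.center 1 x (x * y)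
  have e1 : discDist d w K 1 y = discDist d w K x (x * y) := by
    rw [← discDist_inv hg x 1 y, mul_one]
  have e2 : discDist d w K 1 y⁻¹ = discDist d w K (x * y) x := by
    rw [← discDist_inv hg (x * y) 1 y⁻¹, mul_one]; simp
  have e3 : discDist d w K 1 x⁻¹ = discDist d w K x 1 := by
    rw [← discDist_inv hg x 1 x⁻¹, mul_one]; simp
  have e4 : discDist d w K 1 (x * y)⁻¹ = discDist d w K (x * y) 1 := by
    rw [← discDist_inv hg (x * y) 1 _, mul_one]; simp
  simp only [discQM]
  rw [e1, e2, e3, e4]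
  have a1 := hE _ _ _ h1
  have a2 := hE _ _ _ h2
  have a3 := hE _ _ _ h3
  have b1 := hE x 1 m (by rw [hg.symm x m, hg.symm m 1, hg.symm x 1]; omega)
  have b2 := hE (x * y) 1 m (by rw [hg.symm _ m, hg.symm m 1, hg.symm _ 1]; omega)
  have b3 := hE (x * y) x m (by rw [hg.symm _ m, hg.symm m x, hg.symm _ x]; omega)
  have c1 := discDist_tri (w := w) (K := K) hg 1 m x
  have c2 := discDist_tri (w := w) (K := K) hg 1 m (x * y)
  have c3 := discDist_tri (w := w) (K := K) hg x m (x * y)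
  have d1 := discDist_tri (w := w) (K := K) hg x m 1
  have d2 := discDist_tri (w := w) (K := K) hg (x * y) m 1
  have d3 := discDist_tri (w := w) (K := K) hg (x * y) m x
  rify at *
  rw [abs_le]
  constructor <;> linarith

theorem homogenize {q : G → ℝ} (hq : IsQuasimorphism q) : ∃ p : G → ℝ, IsHomogeneousQM p ∧
    ∀ x, Filter.Tendsto (fun n : ℕ => q (x ^ n) / n) Filter.atTop (nhds (p x)) := by
  obtain ⟨D, hD0, hD⟩ := hq
  have hb : ∀ x (n : ℕ), |q (x ^ n) - n * q x| ≤ (n + 1) * D := by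
    intro x n
    induction n with
    | zero =>
      have := hD 1 1
      simp only [mul_one, sub_self, zero_sub, abs_neg] at this
      simpa using this
    | succ n ih =>
      have h2 := hD (x ^ n) x
      rw [← pow_succ] at h2
      rw [abs_le] at *
      push_cast
      constructor <;> linarith
  have hsub : ∀ x, Subadditive (fun n : ℕ => q (x ^ n) + D) := by
    intro x m n
    have := (abs_le.mp (hD (x ^ m) (x ^ n))).2
    rw [← pow_add] at this
    simp only
    linarith
  have hbdd : ∀ x, BddBelow (Set.range fun n : ℕ => (q (x ^ n) + D) / n) := by
    intro x
    refine ⟨-|q x| - 2 * D, ?_⟩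
    rintro _ ⟨n, rfl⟩
    rcases Nat.eq_zero_or_pos n with rfl | hn
    · have h3 := abs_nonneg (q x)
      simp only [Nat.cast_zero, div_zero]
      linarith
    · have h1 := (abs_le.mp (hb x n)).1
      have hn' : (1 : ℝ) ≤ n := by exact_mod_cast hn
      simp only
      rw [le_div_iff₀ (by linarith)]
      have h3 := neg_abs_le (q x)
      nlinarith
  have hlim : ∀ x, Filter.Tendsto (fun n : ℕ => q (x ^ n) / n) Filter.atTop
      (nhds ((hsub x).lim)) := by
    intro x
    have h1 := (hsub x).tendsto_lim (hbdd x)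
    have h2 : Filter.Tendsto (fun n : ℕ => D / (n : ℝ)) Filter.atTop (nhds 0) :=
      tendsto_const_div_atTop_nhds_zero_nat D
    have := h1.sub h2
    simp only [sub_zero] at this
    refine this.congr fun n => ?_
    ring
  refine ⟨fun x => (hsub x).lim, ⟨?_, ?_⟩, hlim⟩
  · have hclose : ∀ x, |(hsub x).lim - q x| ≤ D := by
      intro x
      have h1 : Filter.Tendsto (fun n : ℕ => |q (x ^ n) / n - q x|) Filter.atTop
        (nhds |(hsub x).lim - q x|) := ((hlim x).sub_const _).abs
      have h2 : Filter.Tendsto (fun n : ℕ => D + D / (n : ℝ)) Filter.atTop (nhds (D + 0)) :=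
        (tendsto_const_div_atTop_nhds_zero_nat D).const_add D
      rw [add_zero] at h2
      refine le_of_tendsto_of_tendsto h1 h2 ?_
      filter_upwards [Filter.eventually_gt_atTop 0] with n hn
      have hn' : (0 : ℝ) < n := by exact_mod_cast hn
      have : q (x ^ n) / n - q x = (q (x ^ n) - n * q x) / n := by field_simp
      rw [this, abs_div, abs_of_pos hn', div_le_iff₀ hn']
      have := hb x n
      have e : (D + D / (n : ℝ)) * n = (n + 1) * D := by field_simp
      linarith
    refine ⟨4 * D, by positivity, fun x y => ?_⟩
    have h1 := hclose x
    have h2 := hclose y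
    have h3 := hclose (x * y)
    have h4 := hD x y
    rw [abs_le] at *
    constructor <;> linarith
  · intro x n
    rcases Nat.eq_zero_or_pos n with rfl | hn
    · refine tendsto_nhds_unique (hlim (x ^ 0)) ?_
      simp only [pow_zero, one_pow, Nat.cast_zero, zero_mul]
      exact tendsto_const_div_atTop_nhds_zero_nat _
    · have hn' : (0 : ℝ) < n := by exact_mod_cast hn
      have h1 := hlim (x ^ n)
      have h2 : Filter.Tendsto (fun m : ℕ => n * (q (x ^ (n * m)) / ((n * m : ℕ) : ℝ)))
          Filter.atTop (nhds (n * (hsub x).lim)) :=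
        ((hlim x).comp (Filter.tendsto_id.const_mul_atTop' hn)).const_mul _
      refine tendsto_nhds_unique h1 (h2.congr fun m => ?_)
      rw [pow_mul]
      push_cast
      field_simp

end qm

/-! ### The axis of `w` -/

section axis

variable {G : Type*} [Group G] {d : G → G → ℕ} {Δ : ℕ}

section chain

variable {y : ℕ → G} {c : ℕ}

theorem chain_a (hg : GeoMetric d Δ)
    (h1 : ∀ k, d (y k) (y (k + 1)) + d (y (k + 1)) (y (k + 2)) ≤ d (y k) (y (k + 2)) + c)
    (h2 : ∀ k, 2 * c + 3 * Δ < 2 * d (y k) (y (k + 1))) (i j : ℕ) :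
    d (y i) (y (i + j)) + d (y (i + j)) (y (i + j + 1)) ≤ d (y i) (y (i + j + 1)) + (c + Δ) := by
  induction j with
  | zero => have := hg.self (y i); simp only [add_zero]; omega
  | succ j ih =>
    have a1 := h1 (i + j)
    have a2 := h2 (i + j)
    exact (hg.step (x := y i) (u := y (i + j)) (v := y (i + j + 1)) (y := y (i + j + 2))
      (a := c + Δ) (b := c) ih a1 (by omega)).1.trans (by rw [add_assoc]; rfl)

theorem chain_a' (hg : GeoMetric d Δ)
    (h1 : ∀ k, d (y k) (y (k + 1)) + d (y (k + 1)) (y (k + 2)) ≤ d (y k) (y (k + 2)) + c)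
    (h2 : ∀ k, 2 * c + 3 * Δ < 2 * d (y k) (y (k + 1))) (j : ℕ) : ∀ k,
    d (y k) (y (k + 1)) + d (y (k + 1)) (y (k + 1 + j)) ≤ d (y k) (y (k + 1 + j)) + (c + Δ) := by
  induction j with
  | zero => intro k; have := hg.self (y (k + 1)); simp only [add_zero]; omega
  | succ j ih =>
    intro k
    have a1 := h1 k
    have a2 : 2 * c + 3 * Δ < 2 * d (y (k + 1)) (y (k + 2)) := h2 (k + 1)
    have i1 := ih (k + 1)
    have e : k + 1 + 1 + j = k + 1 + (j + 1) := by omega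
    rw [e] at i1
    have := (hg.step (x := y k) (u := y (k + 1)) (v := y (k + 2)) (y := y (k + 1 + (j + 1)))
      (a := c) (b := c + Δ) a1 i1 (by omega)).2.1
    omega

theorem chain_b (hg : GeoMetric d Δ)
    (h1 : ∀ k, d (y k) (y (k + 1)) + d (y (k + 1)) (y (k + 2)) ≤ d (y k) (y (k + 2)) + c)
    (h2 : ∀ k, 2 * c + 3 * Δ < 2 * d (y k) (y (k + 1))) {i k m : ℕ} (hik : i ≤ k) (hkm : k ≤ m) :
    d (y i) (y k) + d (y k) (y m) ≤ d (y i) (y m) + (c + 2 * Δ) := by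
  rcases hkm.eq_or_lt with rfl | hlt
  · have := hg.self (y k); omega
  · obtain ⟨j, rfl⟩ := Nat.exists_eq_add_of_le hik
    obtain ⟨j', rfl⟩ := Nat.exists_eq_add_of_le (show i + j + 1 ≤ m from hlt)
    have a1 := chain_a hg h1 h2 i j
    have a2 := chain_a' hg h1 h2 j' (i + j)
    have a3 := h2 (i + j)
    have := (hg.step (x := y i) (u := y (i + j)) (v := y (i + j + 1)) (y := y (i + j + 1 + j'))
      (a := c + Δ) (b := c + Δ) a1 a2 (by omega)).2.1
    omega

end chain

/-- The sequence `1, h₀t, h₀th₁t, …`. -/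
def wseq (h : ℕ → G) (t : G) : ℕ → G
  | 0 => 1
  | k + 1 => wseq h t k * h k * t

theorem wseq_add_three {h : ℕ → G} (hp : ∀ k, h (k + 3) = h k) (t : G) (k : ℕ) :
    wseq h t (k + 3) = wseq h t 3 * wseq h t k := by
  induction k with
  | zero => simp [wseq]
  | succ k ih =>
    change wseq h t (k + 3) * h (k + 3) * t = wseq h t 3 * (wseq h t k * h k * t)
    rw [ih, hp]
    simp only [mul_assoc]

theorem wseq_three_mul {h : ℕ → G} (hp : ∀ k, h (k + 3) = h k) (t : G) (n : ℕ) :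
    wseq h t (3 * n) = wseq h t 3 ^ n := by
  induction n with
  | zero => simp [wseq]
  | succ n ih => rw [Nat.mul_succ, wseq_add_three hp, ih, pow_succ']

theorem GeoMetric.near_pos (hg : GeoMetric d Δ) {x y u v : G} {a : ℕ}
    (hu : d x u + d u y ≤ d x y + a) (hv : d x v + d v y ≤ d x y + a) (h : d x u ≤ d x v) :
    d u v + d x u ≤ d x v + (a + Δ) := by
  have s := hg.symm u v
  have s1 := hg.symm u y
  have s2 := hg.symm v y
  have t1 := hg.tri x u y
  have t2 := hg.tri x v y
  rcases hg.hyp x u y v with h | h <;> omega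

/-- Lemma IV -/
theorem HypEmb.between {H : Subgroup G} (hg : GeoMetric d Δ) (hH : HypEmb d H) (e : ℕ) (t : G) :
    ∃ r, ∀ Y u h γ, h ∈ H → d 1 u + d u Y ≤ d 1 Y + e →
      d 1 (u * h * t) + d (u * h * t) Y ≤ d 1 Y + e → d 1 γ + d γ Y ≤ d 1 Y + e →
      ((d 1 u ≤ d 1 γ ∧ d 1 γ ≤ d 1 (u * h * t)) ∨ (d 1 (u * h * t) ≤ d 1 γ ∧ d 1 γ ≤ d 1 u)) →
      NearCoset d H r γ u := by
  obtain ⟨κ, hκ⟩ := hH.qc' hg (2 * e + 2 * Δ + 2 * d 1 t)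
  refine ⟨κ, fun Y u h γ hh hu hv hγ hor => ?_⟩
  refine hκ u u (u * h) γ (by simp [H.one_mem]) (by simpa using hh) ?_
  have e1 : d (u * h) (u * h * t) = d 1 t := hg.inv_one _ _
  have e2 := hg.symm (u * h) (u * h * t)
  have t1 := hg.tri γ (u * h * t) (u * h)
  have t2 := hg.tri u (u * h) (u * h * t)
  have t3 := hg.tri 1 u (u * h * t)
  have t4 := hg.tri 1 (u * h * t) u
  have s1 := hg.symm u (u * h * t)
  have s2 := hg.symm γ (u * h * t)
  have s3 := hg.symm u γ
  rcases hor with ⟨o1, o2⟩ | ⟨o1, o2⟩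
  · have n1 := hg.near_pos hu hγ o1
    have n2 := hg.near_pos hγ hv o2
    omega
  · have n1 := hg.near_pos hv hγ o1
    have n2 := hg.near_pos hγ hu o2
    omega

theorem comb1 (s : ℕ → ℕ) (m T R σ σ' : ℕ) (P : ℕ → Prop) (hR : 1 ≤ R) (h0 : s 0 = 0)
    (hm : s m = T) (hgap : ∀ k, k < m → s k + 2 * R < s (k + 1)) (hl : σ + 4 * R ≤ σ')
    (hT : σ' ≤ T)
    (hP : ∀ k x y, k < m → s k ≤ x → σ ≤ x → x + R ≤ y → y ≤ s (k + 1) → y ≤ σ' → P k)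
    (hPP : ∀ k, P k → ¬ P (k + 1)) :
    ∃ k, k < m ∧ s k ≤ σ + R ∧ σ' ≤ s (k + 1) + R ∧ P k := by
  classical
  have hex : ∃ j, σ + R < s j ∧ j ≤ m := ⟨m, by omega, le_rfl⟩
  have hf := Nat.find_spec hex
  have hmin := fun i => Nat.find_min hex (m := i)
  generalize Nat.find hex = j at hf hmin
  obtain ⟨hj1, hj2⟩ := hf
  cases j with
  | zero => omega
  | succ k =>
    have hk : s k ≤ σ + R := by
      have := hmin k (by omega)
      by_contra hc
      exact this ⟨by omega, by omega⟩
    have hgk := hgap k (by omega)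
    have hPk : P k := hP k (max (s k) σ) (max (s k) σ + R) (by omega) (by omega) (by omega)
      (by omega) (by omega) (by omega)
    refine ⟨k, by omega, hk, ?_, hPk⟩
    by_contra hc
    have hne : k + 1 ≠ m := by rintro rfl; omega
    have hgk1 := hgap (k + 1) (by omega)
    refine hPP k hPk (hP (k + 1) (s (k + 1)) (s (k + 1) + R) (by omega) (by omega) (by omega)
      (by omega) ?_ (by omega))
    omega

end axis

section mainB

variable {G : Type*} [Group G] {d : G → G → ℕ} {Δ : ℕ}

/-- Basic facts about the sequence `wseq`. -/
theorem wseq_facts (hg : GeoMetric d Δ) {H : Subgroup G} {t : G} {c : ℕ}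
    (hc : ∀ h ∈ H, ∀ h' ∈ H, d 1 h + d h (h * t * h') ≤ d 1 (h * t * h') + c)
    {h : ℕ → G} (hmem : ∀ k, h k ∈ H)
    (hlong : ∀ k, c + 10 * d 1 t + 2 * Δ < d 1 (h k)) :
    (∀ k, d (wseq h t k) (wseq h t (k + 1)) ≤ d 1 (h k) + d 1 t) ∧
    (∀ k, d 1 (h k) ≤ d (wseq h t k) (wseq h t (k + 1)) + d 1 t) ∧
    (∀ i k m, i ≤ k → k ≤ m → d (wseq h t i) (wseq h t k) + d (wseq h t k) (wseq h t m) ≤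
      d (wseq h t i) (wseq h t m) + (c + 4 * d 1 t + 2 * Δ)) := by
  have e : ∀ k, d (wseq h t k) (wseq h t (k + 1)) = d 1 (h k * t) := by
    intro k
    simp only [wseq, mul_assoc]
    exact hg.inv_one _ _
  have u1 : ∀ a, d 1 (a * t) ≤ d 1 a + d 1 t := by
    intro a
    have := hg.tri 1 a (a * t)
    have := hg.inv_one a t
    omega
  have u2 : ∀ a, d 1 a ≤ d 1 (a * t) + d 1 t := by
    intro a
    have := hg.tri 1 (a * t) a
    have := hg.inv_one a t
    have := hg.symm a (a * t)
    omega
  refine ⟨fun k => by rw [e]; exact u1 _, fun k => by rw [e]; exact u2 _, ?_⟩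
  intro i k m hik hkm
  refine chain_b hg (y := wseq h t) (c := c + 4 * d 1 t) ?_ ?_ hik hkm
  · intro k
    have e2 := e (k + 1)
    have e3 : d (wseq h t k) (wseq h t (k + 2)) = d 1 (h k * t * h (k + 1) * t) := by
      have : wseq h t (k + 2) = wseq h t k * (h k * t * h (k + 1) * t) := by
        simp only [wseq, mul_assoc]
      rw [this]
      exact hg.inv_one _ _
    rw [e, e3]
    have e4 : d (wseq h t (k + 1)) (wseq h t (k + 2)) = d 1 (h (k + 1) * t) := e2
    rw [e4]
    have j := hc _ (hmem k) _ (hmem (k + 1))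
    have v1 := u1 (h k)
    have v2 := u1 (h (k + 1))
    have v3 := u2 (h k * t * h (k + 1))
    have v4 : d (h k) (h k * t * h (k + 1)) = d 1 (t * h (k + 1)) := by
      rw [mul_assoc]; exact hg.inv_one _ _
    have v5 : d 1 (h (k + 1)) ≤ d 1 (t * h (k + 1)) + d 1 t := by
      have := hg.tri t 1 (t * h (k + 1))
      have := hg.inv_one t (h (k + 1))
      have := hg.symm t 1
      omega
    omega
  · intro k
    have := u2 (h k)
    have := hlong k
    rw [e]
    omega

theorem no_inverse (hg : GeoMetric d Δ) {H : Subgroup G} (hH : HypEmb d H) {t : G} (ht : t ∉ H)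
    {c : ℕ} (hc : ∀ h ∈ H, ∀ h' ∈ H, d 1 h + d h (h * t * h') ≤ d 1 (h * t * h') + c) (ε : ℕ) :
    ∃ L, ∀ h : ℕ → G, (∀ k, h k ∈ H) → (∀ k, h (k + 3) = h k) → L ≤ d 1 (h 0) →
      d 1 (h 0) + L ≤ d 1 (h 1) → d 1 (h 1) + L ≤ d 1 (h 2) → ∀ n g,
      ¬ (d 1 (g * wseq h t 3) + d (g * wseq h t 3) g + d g (wseq h t 3 ^ n) ≤
        d 1 (wseq h t 3 ^ n) + ε) := by
  set b := c + 4 * d 1 t + 2 * Δ with hb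
  set e := ε + 2 * b with he
  obtain ⟨r, hr⟩ := hH.between hg e t
  obtain ⟨R0, hR0⟩ := hH.sep' hg r
  set R := R0 + 1 with hR
  refine ⟨c + 10 * d 1 t + 2 * Δ + 20 * R + 3 * e + 1, fun h hmem hp hl0 hl1 hl2 n g hcon => ?_⟩
  have hmod : ∀ k, h k = h (k % 3) := by
    intro k
    induction k using Nat.strong_induction_on with
    | _ k ih =>
      by_cases hk : k < 3
      · rw [Nat.mod_eq_of_lt hk]
      · obtain ⟨k, rfl⟩ := Nat.exists_eq_add_of_le (show 3 ≤ k by omega)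
        rw [add_comm 3 k, hp, ih k (by omega)]
        simp
  have hlenk : ∀ k, d 1 (h 0) ≤ d 1 (h k) := by
    intro k
    rw [hmod k]
    have := Nat.mod_lt k (show 0 < 3 by norm_num)
    generalize k % 3 = j at this
    interval_cases j <;> omega
  have hlen2 : ∀ k, d 1 (h 2) ≤ d 1 (h k) + (20 * R + 3 * e) → k % 3 = 2 := by
    intro k hk
    rw [hmod k] at hk
    have := Nat.mod_lt k (show 0 < 3 by norm_num)
    generalize k % 3 = j at *
    interval_cases j <;> omega
  obtain ⟨f1, f2, f3⟩ := wseq_facts hg hc hmem (fun k => by have := hlenk k; omega)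
  have hYm := wseq_three_mul hp t n
  have e1 : wseq h t 0 = 1 := rfl
  have ht' : ∀ k, (wseq h t k)⁻¹ * wseq h t (k + 1) ∉ H := by
    intro k hk
    simp only [wseq, mul_assoc, inv_mul_cancel_left] at hk
    exact ht ((H.mul_mem_cancel_left (hmem k)).mp hk)
  have hstep : ∀ k, wseq h t (k + 1) = wseq h t k * h k * t := fun k => rfl
  set y := wseq h t with hy
  clear_value y
  rw [← hYm] at hcon
  set Y := y (3 * n) with hYdef
  -- the points of the axis
  have sy : ∀ k, k ≤ 3 * n → d 1 (y k) + d (y k) Y ≤ d 1 Y + b := by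
    intro k hk
    have := f3 0 k (3 * n) (by omega) hk
    rwa [e1] at this
  have gy1 : ∀ k, d 1 (y k) + d (y k) (y (k + 1)) ≤ d 1 (y (k + 1)) + b := by
    intro k
    have := f3 0 k (k + 1) (by omega) (by omega)
    rwa [e1] at this
  -- the points of the translate
  have ez : ∀ i j, d (g * y i) (g * y j) = d (y i) (y j) := fun i j => hg.inv g _ _
  have ez0 : g * y 0 = g := by rw [e1, mul_one]
  have sz : ∀ k, k < 3 → d 1 (g * y 3) + d (g * y 3) (g * y (k + 1)) +
      d (g * y (k + 1)) (g * y k) + d (g * y k) (g * y 0) + d (g * y 0) Y ≤ d 1 Y + e := by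
    intro k hk
    have q1 := f3 0 k 3 (by omega) (by omega)
    have q2 := f3 k (k + 1) 3 (by omega) (by omega)
    have q3 := hg.symm (y 3) (y (k + 1))
    have q4 := hg.symm (y (k + 1)) (y k)
    have q5 := hg.symm (y k) (y 0)
    have q6 := hg.symm (y 0) (y 3)
    have q7 := ez 3 0
    rw [ez0] at q7
    simp only [ez]
    rw [ez0]
    omega
  have sz1 : ∀ k, k ≤ 3 → d 1 (g * y k) + d (g * y k) Y ≤ d 1 Y + e := by
    intro k hk
    rcases Nat.lt_or_ge k 3 with h3 | h3
    · have := sz k h3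
      have q1 := hg.tri3 1 (g * y 3) (g * y (k + 1)) (g * y k)
      have q2 := hg.tri (g * y k) (g * y 0) Y
      omega
    · obtain rfl : k = 3 := by omega
      have := sz 2 (by norm_num)
      have q2 := hg.tri3 (g * y 3) (g * y 2) (g * y 0) Y
      simp only [Nat.reduceAdd] at this
      omega
  have gz1 : ∀ k, k < 3 → d 1 (g * y (k + 1)) + d (y k) (y (k + 1)) ≤ d 1 (g * y k) + e := by
    intro k hk
    have := sz k hk
    have q1 := hg.tri 1 (g * y 3) (g * y (k + 1))
    have q2 := hg.tri (g * y k) (g * y 0) Y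
    have q3 := hg.tri 1 (g * y k) Y
    have q4 := ez (k + 1) k
    have q5 := hg.symm (y (k + 1)) (y k)
    omega
  have hσ1 : d 1 (g * y 1) ≤ d 1 Y := by
    have := sz 0 (by norm_num)
    have q1 := hg.tri 1 (g * y 3) (g * y 1)
    have q4 := ez 1 0
    have q5 := hg.symm (y 1) (y 0)
    have q6 := f2 0
    simp only [Nat.reduceAdd] at *
    omega
  -- overlaps
  have hP : ∀ a, a < 3 → ∀ k x x', k < 3 * n → d 1 (y k) ≤ x → d 1 (g * y (a + 1)) ≤ x →
      x + R ≤ x' → x' ≤ d 1 (y (k + 1)) → x' ≤ d 1 (g * y a) → x' ≤ d 1 Y →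
      (y k)⁻¹ * (g * y a) ∈ H := by
    intro a ha k x x' hk o1 o2 o3 o4 o5 o6
    obtain ⟨γ, hγ1, hγ2⟩ := hg.geod 1 Y x (by omega)
    obtain ⟨γ', hγ1', hγ2'⟩ := hg.geod 1 Y x' o6
    have k1 := sy k (by omega)
    have k2 := sy (k + 1) (by omega)
    have k3 := sz1 a (by omega)
    have k4 := sz1 (a + 1) (by omega)
    have ea : g * y (a + 1) = (g * y a) * h a * t := by rw [hstep]; simp only [mul_assoc]
    rw [ea] at k4 o2
    rw [hstep k] at k2 o4
    refine hR0 (y k) (g * y a) γ γ' ?_ ?_ ?_ ?_ ?_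
    · exact hr Y (y k) (h k) γ (hmem k) (by omega) (by omega) (by omega) (Or.inl ⟨by omega, by omega⟩)
    · exact hr Y (y k) (h k) γ' (hmem k) (by omega) (by omega) (by omega) (Or.inl ⟨by omega, by omega⟩)
    · exact hr Y (g * y a) (h a) γ (hmem a) (by omega) (by omega) (by omega) (Or.inr ⟨by omega, by omega⟩)
    · exact hr Y (g * y a) (h a) γ' (hmem a) (by omega) (by omega) (by omega) (Or.inr ⟨by omega, by omega⟩)
    · have := hg.tri 1 γ γ'
      omega
  have hPP : ∀ a k, (y k)⁻¹ * (g * y a) ∈ H → ¬ (y (k + 1))⁻¹ * (g * y a) ∈ H := by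
    intro a k m1 m2
    apply ht' k
    have := H.mul_mem m1 (H.inv_mem m2)
    convert this using 1
    group
  have hgap : ∀ k, k < 3 * n → d 1 (y k) + 2 * R < d 1 (y (k + 1)) := by
    intro k _
    have := gy1 k
    have := f2 k
    have := hlenk k
    omega
  have hself := hg.self (1 : G)
  have z0 := gz1 0 (by norm_num)
  have z1 := gz1 1 (by norm_num)
  have z2 := gz1 2 (by norm_num)
  have y0 := f2 0
  have y1 := f2 1
  have y2 := f2 2
  simp only [Nat.reduceAdd] at z0 z1 z2 y0 y1 y2
  obtain ⟨k2, hk2, a1, a2, a3⟩ := comb1 (fun k => d 1 (y k)) (3 * n) (d 1 Y) R (d 1 (g * y 3))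
    (d 1 (g * y 2)) (fun k => (y k)⁻¹ * (g * y 2) ∈ H) (by omega) (by simp only [e1]; exact hself)
    rfl hgap (by omega) (by omega)
    (fun k x x' hk o1 o2 o3 o4 o5 => hP 2 (by norm_num) k x x' hk o1 o2 o3 o4 o5 (by omega))
    (hPP 2)
  obtain ⟨k1, hk1, b1, b2, b3⟩ := comb1 (fun k => d 1 (y k)) (3 * n) (d 1 Y) R (d 1 (g * y 2))
    (d 1 (g * y 1)) (fun k => (y k)⁻¹ * (g * y 1) ∈ H) (by omega) (by simp only [e1]; exact hself)
    rfl hgap (by omega) (by omega)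
    (fun k x x' hk o1 o2 o3 o4 o5 => hP 1 (by norm_num) k x x' hk o1 o2 o3 o4 o5 (by omega))
    (hPP 1)
  have hmono : ∀ j i, i + j ≤ 3 * n → d 1 (y i) ≤ d 1 (y (i + j)) := by
    intro j i
    induction j with
    | zero => intro _; exact le_rfl
    | succ j ih =>
      intro hj
      have := ih (by omega)
      have := hgap (i + j) (by omega)
      rw [← add_assoc]
      omega
  have l2 : d 1 (y (k2 + 1)) ≤ d 1 (y k2) + d (y k2) (y (k2 + 1)) := hg.tri _ _ _
  have l2' := f1 k2
  have ty2 := hlen2 k2 (by omega)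
  have hne : k1 ≠ k2 := by
    rintro rfl
    have := H.mul_mem (H.inv_mem b3) a3
    apply ht' 1
    convert this using 1
    group
  have hle : k1 ≤ k2 + 1 := by
    by_contra hlt
    have q1 := hgap (k2 + 1) (by omega)
    have q2 := hmono (k1 - (k2 + 1 + 1)) (k2 + 1 + 1) (by omega)
    rw [show k2 + 1 + 1 + (k1 - (k2 + 1 + 1)) = k1 by omega] at q2
    omega
  have hge : k2 ≤ k1 := by
    by_contra hlt
    have q2 := hmono (k2 - (k1 + 1)) (k1 + 1) (by omega)
    rw [show k1 + 1 + (k2 - (k1 + 1)) = k2 by omega] at q2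
    omega
  obtain rfl : k1 = k2 + 1 := by omega
  have l1 : d 1 (y (k2 + 1 + 1)) ≤ d 1 (y (k2 + 1)) + d (y (k2 + 1)) (y (k2 + 1 + 1)) := hg.tri _ _ _
  have l1' := f1 (k2 + 1)
  rw [hmod (k2 + 1), show (k2 + 1) % 3 = 0 by omega] at l1'
  omega

end mainB


section good

variable {G : Type*} [Group G] {d : G → G → ℕ} {Δ : ℕ}

theorem HypEmb.unbdd {H : Subgroup G} (hH : HypEmb d H) (hinf : (H : Set G).Infinite) (n : ℕ) :
    ∃ h ∈ H, n ≤ d 1 h := by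
  by_contra hcon
  push Not at hcon
  exact hinf ((hH.fin n).subset fun h hh => ⟨hh, (hcon h hh).le⟩)

/-- Cosets of `Q` fellow travelling `H` for a long time are among finitely many. -/
theorem good1 (hg : GeoMetric d Δ) {H Q : Subgroup G} (hH : HypEmb d H) (hQ : HypEmb d Q) (r : ℕ) :
    ∃ (n : ℕ) (A : Set G), A.Finite ∧ ∀ h ∈ H, n ≤ d 1 h → ∀ a, NearCoset d Q r 1 a →
      NearCoset d Q r h a → ∃ a' ∈ A, a'⁻¹ * a ∈ Q := by
  obtain ⟨κ, hκ⟩ := hH.qc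
  obtain ⟨κ', hκ'⟩ := hQ.qc' hg (4 * r)
  obtain ⟨R, hR⟩ := hQ.sep' hg (r + κ' + κ)
  set f : G → G := fun k => Classical.epsilon fun a =>
    NearCoset d Q (r + κ' + κ) 1 a ∧ NearCoset d Q (r + κ' + κ) k a with hf
  refine ⟨R + κ, f '' {k | k ∈ H ∧ d 1 k ≤ R + 2 * κ}, (hH.fin _).image _, ?_⟩
  intro h hh hn a h1 h2
  obtain ⟨p, hp1, hp2⟩ := hg.geod 1 h (R + κ) hn
  obtain ⟨k, hk, hpk⟩ := hκ h hh p hp2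
  have hpa : NearCoset d Q κ' p a := by
    obtain ⟨x, hx, ex⟩ := h1
    obtain ⟨x', hx', ex'⟩ := h2
    refine hκ' a (a * x) (a * x') p (by simpa using hx) (by simpa using hx') ?_
    have t1 := hg.tri (a * x) 1 p
    have t2 := hg.tri p h (a * x')
    have t3 := hg.tri3 1 (a * x) (a * x') h
    have s1 := hg.symm 1 (a * x)
    have s2 := hg.symm h (a * x')
    omega
  have hsym := hg.symm p k
  have hka : NearCoset d Q (r + κ' + κ) k a :=
    (hpa.move hg (q := k) (e := κ) (by omega)).mono (by omega)
  have h1a : NearCoset d Q (r + κ' + κ) 1 a := h1.mono (by omega)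
  have hsp : NearCoset d Q (r + κ' + κ) 1 (f k) ∧ NearCoset d Q (r + κ' + κ) k (f k) :=
    Classical.epsilon_spec (p := fun a =>
      NearCoset d Q (r + κ' + κ) 1 a ∧ NearCoset d Q (r + κ' + κ) k a) ⟨a, h1a, hka⟩
  have t1 := hg.tri 1 k p
  have t2 := hg.tri 1 p k
  exact ⟨f k, ⟨k, ⟨hk, by omega⟩, rfl⟩, hR (f k) a 1 k hsp.1 hsp.2 h1a hka (by omega)⟩

/-- The subgroup of elements of `H` conjugated into `Q` by `a`. -/
def conjIn (H Q : Subgroup G) (a : G) : Subgroup H :=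
  Q.comap ((MulAut.conj a⁻¹).toMonoidHom.comp H.subtype)

theorem mem_conjIn {H Q : Subgroup G} {a : G} {x : H} :
    x ∈ conjIn H Q a ↔ a⁻¹ * x * a ∈ Q := by
  simp [conjIn, Subgroup.mem_comap]

theorem good2 (hg : GeoMetric d Δ) {H Q : Subgroup G} (hH : HypEmb d H) (hQ : HypEmb d Q)
    (hinf : (H : Set G).Infinite) (a : G) (hfi : (conjIn H Q a).FiniteIndex) :
    ∀ x ∈ H, a⁻¹ * x * a ∈ Q := by
  have hfin : Finite (H ⧸ conjIn H Q a) := Subgroup.finite_quotient_of_finiteIndex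
  obtain ⟨M, hM⟩ := Finite.exists_le fun c : H ⧸ conjIn H Q a => d ((c.out : H) : G)⁻¹ a
  have hnear : ∀ x ∈ H, NearCoset d Q M x a := by
    intro x hx
    obtain ⟨s, hs⟩ := QuotientGroup.mk_out_eq_mul (conjIn H Q a) (⟨x, hx⟩⁻¹ : H)
    have hs2 := mem_conjIn.mp s.2
    have hm := hM (QuotientGroup.mk (⟨x, hx⟩⁻¹ : H))
    simp only [hs] at hm
    refine ⟨a⁻¹ * ((s : H) : G) * a, hs2, ?_⟩
    rw [← hg.inv ((s : H) : G)] at hm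
    simpa [mul_assoc] using hm
  obtain ⟨R, hR⟩ := hQ.sep' hg M
  obtain ⟨h, hh, hl⟩ := hH.unbdd hinf R
  intro x hx
  have key : ∀ z ∈ H, NearCoset d Q M z (x * a) := by
    intro z hz
    have := (hnear (x⁻¹ * z) (H.mul_mem (H.inv_mem hx) hz)).translate hg x
    simpa using this
  have := hR a (x * a) 1 h (hnear _ H.one_mem) (hnear _ hh) (key _ H.one_mem) (key _ hh) hl
  simpa [mul_assoc] using this

/-- Conjugate-inclusion preorder. -/
def leConj (H Q : Subgroup G) : Prop := ∃ a, ∀ x ∈ H, a⁻¹ * x * a ∈ Q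

theorem leConj.trans {H Q P : Subgroup G} (h1 : leConj H Q) (h2 : leConj Q P) : leConj H P := by
  obtain ⟨a, ha⟩ := h1
  obtain ⟨b, hb⟩ := h2
  refine ⟨a * b, fun x hx => ?_⟩
  have := hb _ (ha x hx)
  simpa [mul_assoc] using this

theorem good_exists (hg : GeoMetric d Δ) {ι : Type*} [Finite ι] {H : Subgroup G} {Q : ι → Subgroup G}
    (hH : HypEmb d H) (hQ : ∀ i, HypEmb d (Q i)) (hinf : (H : Set G).Infinite) (r n : ℕ) :
    ∃ h ∈ H, n ≤ d 1 h ∧ ∀ i, ¬ leConj H (Q i) → ∀ a,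
      ¬ (NearCoset d (Q i) r 1 a ∧ NearCoset d (Q i) r h a) := by
  classical
  by_contra hcon
  push Not at hcon
  choose n1 A hA hA2 using fun i => good1 hg hH (hQ i) r
  obtain ⟨n2, hn2⟩ := Finite.exists_le n1
  set F : Set (H × Subgroup H) := (fun x : H => (x, (⊥ : Subgroup H))) '' {x : H | d 1 (x : G) ≤ n + n2}
    with hF
  set ch : ι → G → G → H := fun i a b => Classical.epsilon fun x : H => a⁻¹ * x * b ∈ Q i with hch
  set F' : Set (H × Subgroup H) := ⋃ i ∈ {i | ¬ leConj H (Q i)},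
    (fun ab : G × G => (ch i ab.1 ab.2, conjIn H (Q i) ab.2)) '' (A i ×ˢ A i) with hF'
  have hFfin : (F ∪ F').Finite := by
    refine Set.Finite.union (Set.Finite.image _ ?_) ?_
    · refine Set.Finite.of_finite_image (f := Subtype.val)
        ((hH.fin (n + n2)).subset ?_) Subtype.val_injective.injOn
      rintro _ ⟨x, hx, rfl⟩
      exact ⟨x.2, hx⟩
    · exact (Set.toFinite _).biUnion fun i _ => ((hA i).prod (hA i)).image _
  have hcover : ⋃ k ∈ hFfin.toFinset, (k.1 • (k.2 : Set H)) = Set.univ := by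
    rw [Set.eq_univ_iff_forall]
    intro x
    simp only [Set.mem_iUnion, Set.Finite.mem_toFinset, exists_prop]
    by_cases hx : d 1 (x : G) ≤ n + n2
    · refine ⟨(x, ⊥), Or.inl ⟨x, hx, rfl⟩, ?_⟩
      rw [Set.mem_smul_set_iff_inv_smul_mem]
      simp
    · obtain ⟨i, hi, a, ha1, ha2⟩ := hcon x x.2 (by omega)
      have hni := hn2 i
      obtain ⟨a1, hm1, ha1'⟩ := hA2 i x x.2 (by omega) a ha1 ha2
      have e1 : d 1 ((x : G)⁻¹) = d 1 (x : G) := by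
        have := hg.inv' (x : G) 1 1
        rw [mul_one, mul_one, hg.symm] at this
        exact this
      have nb1 : NearCoset d (Q i) r 1 ((x : G)⁻¹ * a) := by
        simpa using ha2.translate hg (x : G)⁻¹
      have nb2 : NearCoset d (Q i) r (x : G)⁻¹ ((x : G)⁻¹ * a) := by
        simpa using ha1.translate hg (x : G)⁻¹
      obtain ⟨a2, hm2, ha2'⟩ := hA2 i (x : G)⁻¹ (H.inv_mem x.2) (by omega) _ nb1 nb2
      have hxx : a1⁻¹ * (x : G) * a2 ∈ Q i := by
        have := (Q i).mul_mem ha1' ((Q i).inv_mem ha2')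
        convert this using 1
        group
      have hc : a1⁻¹ * (ch i a1 a2 : G) * a2 ∈ Q i :=
        Classical.epsilon_spec (p := fun x : H => a1⁻¹ * x * a2 ∈ Q i) ⟨x, hxx⟩
      refine ⟨(ch i a1 a2, conjIn H (Q i) a2), Or.inr ?_, ?_⟩
      · refine Set.mem_biUnion (x := i) hi ⟨(a1, a2), ⟨hm1, hm2⟩, rfl⟩
      · rw [Set.mem_smul_set_iff_inv_smul_mem]
        simp only [smul_eq_mul, SetLike.mem_coe, mem_conjIn]
        have := (Q i).mul_mem ((Q i).inv_mem hc) hxx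
        convert this using 1
        push_cast
        group
  obtain ⟨k, hk, hfi⟩ := Subgroup.exists_finiteIndex_of_leftCoset_cover hcover
  rw [Set.Finite.mem_toFinset] at hk
  rcases hk with ⟨x, -, rfl⟩ | hk
  · simp only at hfi
    have hfin : Finite (H ⧸ (⊥ : Subgroup H)) := Subgroup.finite_quotient_of_finiteIndex
    have : Finite H := Finite.of_equiv _ (QuotientGroup.quotientBot (G := H)).toEquiv
    exact hinf (Set.toFinite (H : Set G))
  · simp only [hF', Set.mem_iUnion] at hk
    obtain ⟨i, hi, ⟨ab, -, rfl⟩⟩ := hk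
    exact hi ⟨ab.2, good2 hg hH (hQ i) hinf ab.2 hfi⟩

theorem exists_t (hg : GeoMetric d Δ) {H : Subgroup G} (hH : HypEmb d H)
    (hinf : (H : Set G).Infinite) (hne : H ≠ ⊤) : ∃ g, ∃ h ∈ H, g * h * g⁻¹ ∉ H := by
  by_contra hcon
  push Not at hcon
  apply hne
  rw [eq_top_iff]
  intro g _
  obtain ⟨R, hR⟩ := hH.sep' hg (d 1 g)
  obtain ⟨h, hh, hl⟩ := hH.unbdd hinf R
  have key : ∀ z ∈ H, NearCoset d H (d 1 g) z g := by
    intro z hz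
    have := hcon g⁻¹ z hz
    refine ⟨g⁻¹ * z * g, by simpa using this, ?_⟩
    have e : g * (g⁻¹ * z * g) = z * g := by group
    rw [e, hg.inv_one]
  have key' : ∀ z ∈ H, NearCoset d H (d 1 g) z 1 := by
    intro z hz
    refine ⟨z, hz, ?_⟩
    rw [one_mul, hg.self]
    exact Nat.zero_le _
  have := hR 1 g 1 h (key' _ H.one_mem) (key' _ hh) (key _ H.one_mem) (key _ hh) hl
  simpa using this

end good

section final

variable {G : Type*} [Group G] {d : G → G → ℕ} {Δ : ℕ}

theorem GeoMetric.inv_dist (hg : GeoMetric d Δ) (x : G) : d 1 x⁻¹ = d 1 x := by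
  have := hg.inv' x 1 1
  rw [mul_one, mul_one, hg.symm] at this
  exact this

theorem w_exists (hg : GeoMetric d Δ) {H : Subgroup G} (hH : HypEmb d H) {t : G} (ht : t ∉ H) :
    ∃ C L, ∀ h : ℕ → G, (∀ k, h k ∈ H) → (∀ k, h (k + 3) = h k) → L ≤ d 1 (h 0) →
      d 1 (h 0) + L ≤ d 1 (h 1) → d 1 (h 1) + L ≤ d 1 (h 2) →
      ∃ K, d 1 (wseq h t 3) = K + C ∧ 2 * C + 2 * Δ < K ∧
        (∀ n : ℕ, discQM d (wseq h t 3) K (wseq h t 3 ^ n) ≤ -(n : ℝ)) ∧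
        (∀ k, k ≤ 3 → d 1 (wseq h t k) + d (wseq h t k) (wseq h t 3) ≤ d 1 (wseq h t 3) + C) := by
  obtain ⟨c, hc⟩ := hH.joint hg t ht
  set b := c + 4 * d 1 t + 2 * Δ with hb
  set C := b + 1 with hC
  obtain ⟨L, hL⟩ := no_inverse hg hH ht hc (3 * C + Δ)
  refine ⟨C, L + c + 20 * d 1 t + 20 * Δ + 20 * C, fun h hmem hp h0 h1 h2 => ?_⟩
  have hB := hL h hmem hp (by omega) (by omega) (by omega)
  have hlong : ∀ k, c + 10 * d 1 t + 2 * Δ < d 1 (h k) := by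
    intro k
    induction k using Nat.strong_induction_on with
    | _ k ih =>
      by_cases hk : k < 3
      · interval_cases k <;> omega
      · obtain ⟨k, rfl⟩ := Nat.exists_eq_add_of_le (show 3 ≤ k by omega)
        rw [add_comm 3 k, hp]
        exact ih k (by omega)
  obtain ⟨f1, f2, f3⟩ := wseq_facts hg hc hmem hlong
  have hpow := wseq_three_mul hp t
  have e1 : wseq h t 0 = 1 := rfl
  set w := wseq h t 3 with hw
  have hs : ∀ k, k ≤ 3 → d 1 (wseq h t k) + d (wseq h t k) w ≤ d 1 w + b := by
    intro k hk
    have := f3 0 k 3 (by omega) hk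
    rwa [e1] at this
  have hwl : 3 * C + 2 * Δ < d 1 w := by
    have q1 := hs 1 (by norm_num)
    have q2 := f2 0
    rw [e1, zero_add] at q2
    omega
  obtain ⟨K, hK⟩ := Nat.exists_eq_add_of_le (show C ≤ d 1 w by omega)
  refine ⟨K, by omega, by omega, ?_, fun k hk => by have := hs k hk; omega⟩
  intro n
  have hlow : ∀ n : ℕ, n * (K + 1) ≤ d 1 (w ^ n) := by
    intro n
    induction n with
    | zero => simp
    | succ n ih =>
      have := f3 0 (3 * n) (3 * (n + 1)) (by omega) (by omega)
      rw [e1, hpow, hpow] at this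
      have e2 : d (w ^ n) (w ^ (n + 1)) = d 1 w := by rw [pow_succ, hg.inv_one]
      rw [e2] at this
      have e3 : (n + 1) * (K + 1) = n * (K + 1) + (K + 1) := by ring
      omega
  have hup : ∀ n : ℕ, discDist d w K 1 (w ^ n) ≤ n * K := by
    intro n
    induction n with
    | zero =>
      have := discDist_le_dist d w K 1 1
      rw [hg.self] at this
      simpa using this
    | succ n ih =>
      have t1 := discDist_tri (w := w) (K := K) hg 1 (w ^ n) (w ^ n * w)
      have t2 := discDist_jump (w := w) (K := K) hg (w ^ n)
      have e3 : (n + 1) * K = n * K + K := by ring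
      rw [pow_succ]
      omega
  have hinv : discDist d w K 1 (w ^ n)⁻¹ = d 1 (w ^ n) := by
    by_contra hne
    rw [← hg.inv_dist] at hne
    obtain ⟨g, hgg⟩ := disc_straight (C := C) hg (by omega) (by omega) hne
    apply hB n (w ^ n * g)
    rw [← hg.inv (w ^ n) 1 g, ← hg.inv (w ^ n) g, ← hg.inv (w ^ n) _ (w ^ n)⁻¹, hg.inv_dist,
      mul_one, mul_inv_cancel, ← mul_assoc] at hgg
    have s1 := hg.symm (w ^ n) (w ^ n * g)
    have s2 := hg.symm (w ^ n * g) (w ^ n * g * w)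
    have s3 := hg.symm (w ^ n * g * w) 1
    omega
  have l := hlow n
  have u := hup n
  simp only [discQM]
  rw [hinv]
  have e4 : n * (K + 1) = n * K + n := by ring
  rw [e4] at l
  have l' : ((n * K + n : ℕ) : ℝ) ≤ d 1 (w ^ n) := by exact_mod_cast l
  have u' : (discDist d w K 1 (w ^ n) : ℝ) ≤ ((n * K : ℕ) : ℝ) := by exact_mod_cast u
  push_cast at l' u'
  linarith

theorem exists_max_conj {ι : Type*} [Finite ι] (H : ι → Subgroup G)
    (hinf : ∃ j, (H j : Set G).Infinite) :
    ∃ j, (H j : Set G).Infinite ∧ ∀ i, leConj (H j) (H i) → leConj (H i) (H j) := by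
  classical
  have := Fintype.ofFinite ι
  obtain ⟨j1, hj1⟩ := hinf
  obtain ⟨j, hj, hmax⟩ := Finset.exists_max_image
    (Finset.univ.filter fun j => (H j : Set G).Infinite)
    (fun j => (Finset.univ.filter fun k => leConj (H k) (H j)).card) ⟨j1, by simpa using hj1⟩
  simp only [Finset.mem_filter, Finset.mem_univ, true_and] at hj hmax
  refine ⟨j, hj, fun i hi => ?_⟩
  by_contra hcon
  have hinfi : (H i : Set G).Infinite := by
    obtain ⟨a, ha⟩ := hi
    exact Set.infinite_of_injOn_mapsTo (f := fun x => a⁻¹ * x * a)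
      (fun x _ y _ h => by simpa using h) (fun x hx => ha x hx) hj
  have hlt : (Finset.univ.filter fun k => leConj (H k) (H j)).card <
      (Finset.univ.filter fun k => leConj (H k) (H i)).card := by
    apply Finset.card_lt_card
    refine Finset.ssubset_iff_subset_ne.mpr ⟨fun k hk => ?_, fun heq => ?_⟩
    · simp only [Finset.mem_filter, Finset.mem_univ, true_and] at hk ⊢
      exact hk.trans hi
    · have : i ∈ Finset.univ.filter fun k => leConj (H k) (H j) := by
        rw [heq]
        simp only [Finset.mem_filter, Finset.mem_univ, true_and]
        exact ⟨1, fun x hx => by simpa using hx⟩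
      simp only [Finset.mem_filter, Finset.mem_univ, true_and] at this
      exact hcon this
  exact absurd (hmax i hinfi) (by omega)

theorem not_straight_conj (hg : GeoMetric d Δ) {H Q : Subgroup G} (hH : HypEmb d H)
    (hQ : HypEmb d Q) {t : G} (ht : t ∉ H) (hle : leConj Q H) (r : ℕ) :
    ∃ L, ∀ h0 ∈ H, ∀ h1 ∈ H, L ≤ d 1 h0 → L ≤ d 1 h1 → ∀ g,
      NearCoset d Q r g 1 → NearCoset d Q r (g * h0) 1 → NearCoset d Q r (g * h0 * t) 1 →
      NearCoset d Q r (g * h0 * t * h1) 1 → False := by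
  obtain ⟨k, hk⟩ := hle
  obtain ⟨R, hR⟩ := hH.sep' hg (r + d 1 k)
  refine ⟨R, fun h0 hh0 h1 hh1 l0 l1 g n1 n2 n3 n4 => ht ?_⟩
  have key : ∀ p, NearCoset d Q r p 1 → NearCoset d H (r + d 1 k) p k := by
    rintro p ⟨x, hx, hpx⟩
    refine ⟨k⁻¹ * x * k, hk x hx, ?_⟩
    have e : k * (k⁻¹ * x * k) = x * k := by group
    rw [e]
    rw [one_mul] at hpx
    have := hg.tri p x (x * k)
    have := hg.inv_one x k
    omega
  have key2 : ∀ p, ∀ h ∈ H, NearCoset d H (r + d 1 k) (p * h) p := by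
    intro p h hh
    refine ⟨h, hh, ?_⟩
    rw [hg.self]
    exact Nat.zero_le _
  have a1 := hR g k g (g * h0) (by simpa using key2 g 1 H.one_mem) (key2 g h0 hh0) (key _ n1)
    (key _ n2) (by rwa [hg.inv_one])
  have a2 := hR (g * h0 * t) k (g * h0 * t) (g * h0 * t * h1)
    (by simpa using key2 (g * h0 * t) 1 H.one_mem) (key2 _ h1 hh1) (key _ n3)
    (key _ n4) (by rwa [hg.inv_one])
  have := H.mul_mem a1 (H.inv_mem a2)
  have e : g⁻¹ * k * ((g * h0 * t)⁻¹ * k)⁻¹ = h0 * t := by group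
  rw [e] at this
  exact (H.mul_mem_cancel_left hh0).mp this

theorem abstract_main (hg : GeoMetric d Δ) {ι : Type*} [Finite ι] (H : ι → Subgroup G)
    (hH : ∀ i, HypEmb d (H i)) (hne : ∀ i, H i ≠ ⊤) (hinf : ∃ j, (H j : Set G).Infinite) :
    ∃ q : G → ℝ, IsHomogeneousQM q ∧ (¬ ∀ x y : G, q (x * y) = q x + q y) ∧
      ∀ i, ∀ x ∈ H i, q x = 0 := by
  obtain ⟨j, hj, hmax⟩ := exists_max_conj H hinf
  obtain ⟨g0, k0, hk0, ht⟩ := exists_t hg (hH j) hj (hne j)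
  set t := g0 * k0 * g0⁻¹ with htdef
  obtain ⟨C, L, hCL⟩ := w_exists hg (hH j) ht
  choose r hr using fun i => (hH i).qc' hg (3 * C + Δ + C)
  obtain ⟨r1, hr1⟩ := Finite.exists_le r
  have hL2 : ∀ i, ∃ L, leConj (H i) (H j) → ∀ h0 ∈ H j, ∀ h1 ∈ H j, L ≤ d 1 h0 → L ≤ d 1 h1 → ∀ g,
      NearCoset d (H i) (r1 + d 1 t) g 1 → NearCoset d (H i) (r1 + d 1 t) (g * h0) 1 →
      NearCoset d (H i) (r1 + d 1 t) (g * h0 * t) 1 →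
      NearCoset d (H i) (r1 + d 1 t) (g * h0 * t * h1) 1 → False := by
    intro i
    by_cases hle : leConj (H i) (H j)
    · obtain ⟨L, hL⟩ := not_straight_conj hg (hH j) (hH i) ht hle (r1 + d 1 t)
      exact ⟨L, fun _ => hL⟩
    · exact ⟨0, fun h => absurd h hle⟩
  choose L2 hL2 using hL2
  obtain ⟨L3, hL3⟩ := Finite.exists_le L2
  obtain ⟨h0, hh0, hl0, hgood⟩ := good_exists hg (hH j) hH hj (r1 + d 1 t) (L + L3)
  obtain ⟨h1, hh1, hl1⟩ := (hH j).unbdd hj (d 1 h0 + L)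
  obtain ⟨h2, hh2, hl2⟩ := (hH j).unbdd hj (d 1 h1 + L)
  set h : ℕ → G := fun k => if k % 3 = 0 then h0 else if k % 3 = 1 then h1 else h2 with hdef
  have hmem : ∀ k, h k ∈ H j := by
    intro k
    simp only [hdef]
    split_ifs <;> assumption
  have hper : ∀ k, h (k + 3) = h k := by
    intro k
    simp only [hdef, Nat.add_mod_right]
  have v0 : h 0 = h0 := rfl
  have v1 : h 1 = h1 := rfl
  have v2 : h 2 = h2 := rfl
  obtain ⟨K, hK1, hK2, hneg, hstr⟩ := hCL h hmem hper (by rw [v0]; omega) (by rw [v0, v1]; omega)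
    (by rw [v1, v2]; omega)
  have y1 : wseq h t 1 = h0 * t := by simp [wseq, v0]
  have y2 : wseq h t 2 = h0 * t * h1 * t := by
    change wseq h t 1 * h 1 * t = _
    rw [y1, v1]
  have y3 : wseq h t 3 = h0 * t * h1 * t * h2 * t := by
    change wseq h t 2 * h 2 * t = _
    rw [y2, v2]
  have s0 := hstr 0 (by norm_num)
  have s1 := hstr 1 (by norm_num)
  have s2 := hstr 2 (by norm_num)
  rw [y1] at s1
  rw [y2] at s2
  set w := wseq h t 3 with hw
  -- vanishing
  have hvan : ∀ i, ∀ x ∈ H i, discDist d w K 1 x = d 1 x := by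
    intro i x hx
    by_contra hcon
    obtain ⟨g, hgx⟩ := disc_straight (C := C) hg hK1 hK2 hcon
    have near : ∀ p, d 1 p + d p w ≤ d 1 w + C → NearCoset d (H i) r1 (g * p) 1 := by
      intro p hp
      refine NearCoset.mono (hr1 i) (hr i 1 1 x (g * p) (by simp [(H i).one_mem]) (by simpa using hx) ?_)
      have u1 := hg.tri 1 g (g * p)
      have u2 := hg.tri (g * p) (g * w) x
      have u3 := hg.inv_one g p
      have u4 := hg.inv g p w
      have u5 := hg.inv_one g w
      omega
    have back : ∀ p, NearCoset d (H i) r1 (p * t) 1 → NearCoset d (H i) (r1 + d 1 t) p 1 := by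
      intro p hp
      exact hp.move hg (by rw [hg.inv_one])
    have n0 : NearCoset d (H i) (r1 + d 1 t) g 1 := by
      have := near 1 (by have := hg.self (1 : G); omega)
      rw [mul_one] at this
      exact this.mono (by omega)
    have n1 := near (h0 * t) s1
    have n2 := near (h0 * t * h1 * t) s2
    rw [← mul_assoc] at n1
    have n2' : NearCoset d (H i) r1 (g * h0 * t * h1 * t) 1 := by
      simpa only [mul_assoc] using n2
    have n1b := back _ n1
    by_cases hle : leConj (H j) (H i)
    · have hLi := hL3 i
      exact hL2 i (hmax i hle) h0 hh0 h1 hh1 (by omega) (by omega) g n0 n1b (n1.mono (by omega))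
        (back _ n2')
    · refine hgood i hle g⁻¹ ⟨?_, ?_⟩
      · simpa using n0.translate hg g⁻¹
      · simpa using n1b.translate hg g⁻¹
  obtain ⟨q, hq, hlim⟩ := homogenize (discQM_isQM hg hK1 hK2)
  have hq0 : ∀ i, ∀ x ∈ H i, q x = 0 := by
    intro i x hx
    refine tendsto_nhds_unique (hlim x) ?_
    have : (fun n : ℕ => discQM d w K (x ^ n) / n) = fun _ => 0 := by
      funext n
      have hxn := (H i).pow_mem hx n
      simp only [discQM]
      rw [hvan i _ hxn, hvan i _ ((H i).inv_mem hxn), hg.inv_dist]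
      simp
    rw [this]
    exact tendsto_const_nhds
  refine ⟨q, hq, fun hhom => ?_, hq0⟩
  have hw1 : q w ≤ -1 := by
    refine le_of_tendsto (hlim w) ?_
    filter_upwards [Filter.eventually_gt_atTop 0] with n hn
    have hn' : (0 : ℝ) < n := by exact_mod_cast hn
    rw [div_le_iff₀ hn']
    have := hneg n
    linarith
  have q1 : q 1 = 0 := hq0 j 1 (H j).one_mem
  have qt : q t = 0 := by
    have a := hhom g0 g0⁻¹
    rw [mul_inv_cancel, q1] at a
    rw [htdef, hhom, hhom, hq0 j k0 hk0]
    linarith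
  rw [y3, hhom, hhom, hhom, hhom, hhom, qt, hq0 j h0 hh0, hq0 j h1 hh1, hq0 j h2 hh2] at hw1
  norm_num at hw1

end final

section morse

variable {G : Type*} [Group G] {d : G → G → ℕ} {Δ : ℕ}

theorem log_lemma (hg : GeoMetric d Δ) {M D : ℕ} (p : G) (k : ℕ) : ∀ (γ : ℕ → G) (n : ℕ),
    n ≤ 2 ^ k → (∀ i, i < n → d (γ i) (γ (i + 1)) ≤ M) → (∀ i, i ≤ n → D ≤ d (γ i) p) →
    2 * D + d (γ 0) (γ n) ≤ d (γ 0) p + d p (γ n) + M + k * Δ := by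
  induction k with
  | zero =>
    intro γ n hn hs hD
    have h0 := hD 0 (by omega)
    have h1 := hD n le_rfl
    have s := hg.symm (γ n) p
    rcases Nat.eq_zero_or_pos n with rfl | hpos
    · have := hg.self (γ 0)
      omega
    · obtain rfl : n = 1 := by simp at hn; omega
      have := hs 0 (by omega)
      simp only [zero_add] at this
      omega
  | succ k ih =>
    intro γ n hn hs hD
    rw [pow_succ] at hn
    have i1 := ih γ (n / 2) (by omega) (fun i hi => hs i (by omega)) (fun i hi => hD i (by omega))
    have i2 := ih (fun i => γ (n / 2 + i)) (n - n / 2) (by omega)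
      (fun i hi => hs (n / 2 + i) (by omega)) (fun i hi => hD (n / 2 + i) (by omega))
    simp only [add_zero] at i2
    rw [show n / 2 + (n - n / 2) = n by omega] at i2
    have s1 := hg.symm (γ (n / 2)) p
    have s2 := hg.symm (γ n) p
    have e : (k + 1) * Δ = k * Δ + Δ := by ring
    rw [e]
    rcases hg.hyp (γ 0) (γ (n / 2)) (γ n) p with h | h <;> omega

theorem sq_le_two_pow (q : ℕ) (hq : 4 ≤ q) : q * q ≤ 2 ^ q := by
  induction q, hq using Nat.le_induction with
  | base => norm_num
  | succ q hq ih =>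
    rw [pow_succ]
    nlinarith

theorem morse (hg : GeoMetric d Δ) {H : Subgroup G} {A B M : ℕ}
    (hpath : ∀ u ∈ H, ∀ v ∈ H, ∃ (n : ℕ) (γ : ℕ → G), n ≤ A * d u v + B ∧ γ 0 = u ∧ γ n = v ∧
      (∀ i, γ i ∈ H) ∧ ∀ i, i < n → d (γ i) (γ (i + 1)) ≤ M) :
    ∃ κ, ∀ h ∈ H, ∀ p, d 1 p + d p h = d 1 h → ∃ k ∈ H, d p k ≤ κ := by
  classical
  set q0 := 12 * A * Δ + B + 4 with hq0
  set κ := Δ * q0 + M + 2 * Δ with hκ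
  refine ⟨κ, fun h hh => ?_⟩
  by_contra hcon
  push Not at hcon
  obtain ⟨p0, hp0, hp0'⟩ := hcon
  -- the extremal distance
  set S : Set ℕ := {D | ∃ p, d 1 p + d p h = d 1 h ∧ ∀ k ∈ H, D ≤ d p k} with hS
  have hne : S.Nonempty := ⟨κ + 1, p0, hp0, fun k hk => hp0' k hk⟩
  have hbd : BddAbove S := by
    refine ⟨d 1 h, ?_⟩
    rintro D ⟨p, hp, hD⟩
    have := hD 1 H.one_mem
    have := hg.symm p 1
    omega
  obtain ⟨p, hp, hpD⟩ := Nat.sSup_mem hne hbd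
  have hDκ : κ + 1 ≤ sSup S := le_csSup hbd ⟨p0, hp0, fun k hk => hp0' k hk⟩
  have hclose : ∀ x, d 1 x + d x h = d 1 h → ∃ k ∈ H, d x k ≤ sSup S := by
    intro x hx
    by_contra hc
    push Not at hc
    have := le_csSup hbd (show sSup S + 1 ∈ S from ⟨x, hx, fun k hk => hc k hk⟩)
    omega
  set D := sSup S with hD
  clear_value D
  have hsym := hg.symm p 1
  have hD1 := hpD 1 H.one_mem
  have hDh := hpD h hh
  -- the points `u`, `v`
  have hu : ∃ u u', u' ∈ H ∧ d 1 u + d u p = d 1 p ∧ d u' p ≤ 3 * D ∧ 2 * D + d u u' ≤ d u p + d u' p := by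
    rcases le_total (d 1 p) (2 * D) with hle | hle
    · refine ⟨1, 1, H.one_mem, ?_, by omega, ?_⟩ <;> rw [hg.self] <;> omega
    · obtain ⟨u, hu1, hu2⟩ := hg.geod 1 p (d 1 p - 2 * D) (by omega)
      have t1 := hg.tri u p h
      have t2 := hg.tri 1 u h
      obtain ⟨u', hu', hd⟩ := hclose u (by omega)
      have t3 := hg.tri u u' p
      have t4 := hg.tri u' u p
      have s := hg.symm u u'
      exact ⟨u, u', hu', by omega, by omega, by omega⟩
  have hv : ∃ v v', v' ∈ H ∧ d p v + d v h = d p h ∧ d p v' ≤ 3 * D ∧ 2 * D + d v v' ≤ d p v + d p v' := by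
    rcases le_total (d p h) (2 * D) with hle | hle
    · refine ⟨h, h, hh, ?_, by omega, ?_⟩ <;> rw [hg.self] <;> omega
    · obtain ⟨v, hv1, hv2⟩ := hg.geod p h (2 * D) (by omega)
      have t1 := hg.tri 1 p v
      have t2 := hg.tri 1 v h
      obtain ⟨v', hv', hd⟩ := hclose v (by omega)
      have t3 := hg.tri p v' v
      have t4 := hg.tri p v v'
      have s := hg.symm v v'
      exact ⟨v, v', hv', by omega, by omega, by omega⟩
  obtain ⟨u, u', hu', u1, u2, u3⟩ := hu
  obtain ⟨v, v', hv', v1, v2, v3⟩ := hv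
  have huv : d u p + d p v ≤ d u v := by
    have := hg.tri3 1 u v h
    omega
  obtain ⟨n, γ, hn, g0, gn, gH, gs⟩ := hpath u' hu' v' hv'
  have hD6 : d u' v' ≤ 6 * D := by
    have := hg.tri u' p v'
    omega
  have hΔ := hg.pos
  set q := D / Δ with hq
  have hq1 : q * Δ ≤ D := Nat.div_mul_le_self _ _
  have hq2 : D < (q + 1) * Δ := by
    rw [add_mul, one_mul]
    exact Nat.lt_div_mul_add hΔ
  have hq3 : q0 ≤ q := by
    rw [hq, Nat.le_div_iff_mul_le hΔ, mul_comm]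
    omega
  have hnq : n ≤ 2 ^ q := by
    have b1 : A * d u' v' ≤ A * (6 * D) := Nat.mul_le_mul_left _ hD6
    have b2 : A * (6 * D) ≤ A * (6 * ((q + 1) * Δ)) := by gcongr
    have b3 := sq_le_two_pow q (by omega)
    have b4 : (12 * A * Δ + B) * q ≤ q * q := by
      apply Nat.mul_le_mul_right
      omega
    have b5 : 1 ≤ q := by omega
    have b6 : A * (6 * ((q + 1) * Δ)) + B ≤ (12 * A * Δ + B) * q := by
      have c1 : 6 * (A * Δ) * 1 ≤ 6 * (A * Δ) * q := Nat.mul_le_mul_left _ b5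
      have c2 : B * 1 ≤ B * q := Nat.mul_le_mul_left _ b5
      nlinarith
    omega
  have hlog := log_lemma hg p q γ n hnq gs (fun i _ => by
    rw [hg.symm]; exact hpD _ (gH i))
  rw [g0, gn] at hlog
  -- hyperbolicity at `p`
  have s1 := hg.symm u' p
  have s2 := hg.symm u p
  have s3 := hg.symm u u'
  have s4 := hg.symm v v'
  have s5 := hg.symm v p
  have s6 := hg.symm v' p
  have h1 := hg.hyp u u' v p
  have h2 := hg.hyp u' v' v p
  have s7 := hg.symm v' v
  omega

end morse


section interface

variable {G : Type*} [Group G]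

theorem wordLength_le {S : Set G} {g : G} (l : List G) (hl : ∀ x ∈ l, x ∈ S ∨ x⁻¹ ∈ S)
    (hp : l.prod = g) : wordLength S g ≤ l.length :=
  Nat.sInf_le ⟨l, rfl, hl, hp⟩

theorem wordLength_exists {S : Set G} {g : G} (hg : g ∈ Subgroup.closure S) :
    ∃ l : List G, l.length = wordLength S g ∧ (∀ x ∈ l, x ∈ S ∨ x⁻¹ ∈ S) ∧ l.prod = g := by
  have hne : {n : ℕ | ∃ l : List G, l.length = n ∧ (∀ x ∈ l, x ∈ S ∨ x⁻¹ ∈ S) ∧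
      l.prod = g}.Nonempty := by
    rw [← Subgroup.mem_toSubmonoid, Subgroup.closure_toSubmonoid] at hg
    obtain ⟨l, hl, hp⟩ := Submonoid.exists_list_of_mem_closure hg
    exact ⟨l.length, l, rfl, fun x hx => by simpa using hl x hx, hp⟩
  exact Nat.sInf_mem hne

theorem wordLength_one (S : Set G) : wordLength S 1 = 0 := by
  have := wordLength_le (S := S) (g := 1) [] (by simp) (by simp)
  simpa using this

theorem wordLength_mul {S : Set G} (hS : Subgroup.closure S = ⊤) (a b : G) :
    wordLength S (a * b) ≤ wordLength S a + wordLength S b := by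
  obtain ⟨l, h1, h2, h3⟩ := wordLength_exists (S := S) (g := a) (by simp [hS])
  obtain ⟨m, k1, k2, k3⟩ := wordLength_exists (S := S) (g := b) (by simp [hS])
  have := wordLength_le (S := S) (g := a * b) (l ++ m) (by
    intro x hx
    rcases List.mem_append.mp hx with h | h
    · exact h2 x h
    · exact k2 x h) (by rw [List.prod_append, h3, k3])
  rw [List.length_append] at this
  omega

theorem wordLength_inv {S : Set G} (hS : Subgroup.closure S = ⊤) (a : G) :
    wordLength S a⁻¹ ≤ wordLength S a := by
  obtain ⟨l, h1, h2, h3⟩ := wordLength_exists (S := S) (g := a) (by simp [hS])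
  have := wordLength_le (S := S) (g := a⁻¹) (l.map (·⁻¹)).reverse (by
    intro x hx
    simp only [List.mem_reverse, List.mem_map] at hx
    obtain ⟨y, hy, rfl⟩ := hx
    rw [inv_inv]
    exact (h2 y hy).symm) (by rw [← h3, List.prod_inv_reverse])
  simpa [h1] using this

/-- The integer word metric. -/
noncomputable def wd (S : Set G) (x y : G) : ℕ := wordLength S (x⁻¹ * y)

theorem wd_geo {X : Set G} (hX : Subgroup.closure X = ⊤) (hhyp : IsHyperbolicDist (wordDist X)) :
    ∃ Δ, GeoMetric (wd X) Δ := by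
  obtain ⟨δ, hδ0, hδ⟩ := hhyp
  have tri : ∀ x y z, wd X x z ≤ wd X x y + wd X y z := by
    intro x y z
    have := wordLength_mul hX (x⁻¹ * y) (y⁻¹ * z)
    simpa [wd, mul_assoc] using this
  have symm : ∀ x y, wd X x y = wd X y x := by
    have key : ∀ x y, wd X x y ≤ wd X y x := by
      intro x y
      have := wordLength_inv hX (y⁻¹ * x)
      simpa [wd] using this
    exact fun x y => le_antisymm (key x y) (key y x)
  refine ⟨⌈2 * δ⌉₊ + 1, ⟨fun x => by simp [wd, wordLength_one], symm, tri, ?_, ?_, ?_, by omega⟩⟩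
  · intro a x y
    simp [wd, mul_assoc]
  · intro x y s hs
    obtain ⟨l, h1, h2, h3⟩ := wordLength_exists (S := X) (g := x⁻¹ * y) (by simp [hX])
    have h1' : l.length = wd X x y := h1
    refine ⟨x * (l.take s).prod, ?_⟩
    have a1 : wd X x (x * (l.take s).prod) ≤ s := by
      have := wordLength_le (S := X) (l.take s) (fun z hz => h2 z (List.mem_of_mem_take hz)) rfl
      simp only [wd, inv_mul_cancel_left]
      rw [List.length_take] at this
      omega
    have a2 : wd X (x * (l.take s).prod) y ≤ wd X x y - s := by
      have e : (x * (l.take s).prod)⁻¹ * y = (l.drop s).prod := by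
        have := l.prod_take_mul_prod_drop s
        rw [h3] at this
        rw [mul_inv_rev, mul_assoc, ← this, inv_mul_cancel_left]
      have := wordLength_le (S := X) (l.drop s) (fun z hz => h2 z (List.mem_of_mem_drop hz)) rfl
      rw [List.length_drop, h1'] at this
      rw [wd, e]
      exact this
    have := tri x (x * (l.take s).prod) y
    omega
  · intro x y z w
    have h := hδ w x y z
    have hc : 2 * δ ≤ (⌈2 * δ⌉₊ : ℝ) := Nat.le_ceil _
    have e : ∀ a b, wordDist X a b = (wd X a b : ℝ) := fun a b => rfl
    simp only [gromovProd, e] at h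
    rcases min_cases (((wd X w x : ℝ) + wd X w y - wd X x y) / 2)
      (((wd X w y : ℝ) + wd X w z - wd X y z) / 2) with ⟨h', -⟩ | ⟨h', -⟩
    · left
      rw [h'] at h
      rw [symm z w, symm y w]
      rify
      linarith
    · right
      rw [h'] at h
      rw [symm x w, symm y w]
      rify
      linarith

theorem hypEmb_of {X : Set G} {Δ : ℕ} (hX : Subgroup.closure X = ⊤) (hg : GeoMetric (wd X) Δ)
    {H : Subgroup G} (hH : IsHypEmbFamily X (fun _ : Fin 1 => H)) : HypEmb (wd X) H := by
  obtain ⟨hQ1, Y, hY, μ, c, hμ, hc, hqi⟩ := hH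
  obtain ⟨hYf, hYH, hYcl⟩ := hY 0
  have hqi0 := hqi 0
  generalize Y 0 = Y0 at hYf hYH hYcl hqi0
  have hw1 : ∀ x, wd X 1 x = wordLength X x := fun x => by simp [wd]
  -- alphabet
  have hAf : (Y0 ∪ Y0⁻¹).Finite := hYf.union hYf.inv
  have hAH : ∀ x ∈ Y0 ∪ Y0⁻¹, x ∈ H := by
    rintro x (hx | hx)
    · exact hYH hx
    · have := H.inv_mem (hYH hx)
      simpa using this
  refine ⟨?_, ?_, ?_⟩
  · obtain ⟨M, hM⟩ : ∃ M, ∀ x ∈ Y0 ∪ Y0⁻¹, wordLength X x ≤ M := by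
      obtain ⟨M, hM⟩ := (hAf.image (wordLength X)).bddAbove
      exact ⟨M, fun x hx => hM ⟨x, hx, rfl⟩⟩
    refine morse hg (A := ⌈μ⌉₊) (B := ⌈c⌉₊) (M := M) ?_
    intro u hu v hv
    have huv : u⁻¹ * v ∈ H := H.mul_mem (H.inv_mem hu) hv
    obtain ⟨l, h1, h2, h3⟩ := wordLength_exists (S := Y0) (g := u⁻¹ * v) (by rw [hYcl]; exact huv)
    refine ⟨l.length, fun i => u * (l.take i).prod, ?_, by simp, by simp [h3], ?_, ?_⟩
    · have a := hqi0 _ huv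
      have b1 : μ ≤ ⌈μ⌉₊ := Nat.le_ceil _
      have b2 : c ≤ ⌈c⌉₊ := Nat.le_ceil _
      rw [h1]
      have b3 : (wordLength X (u⁻¹ * v) : ℝ) = wd X u v := rfl
      rw [b3] at a
      have b4 : μ * (wd X u v : ℝ) ≤ ⌈μ⌉₊ * wd X u v := by gcongr
      have : (wordLength Y0 (u⁻¹ * v) : ℝ) ≤ ⌈μ⌉₊ * wd X u v + ⌈c⌉₊ := by linarith
      exact_mod_cast this
    · intro i
      refine H.mul_mem hu (H.list_prod_mem fun x hx => hAH x ?_)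
      simpa using h2 x (List.mem_of_mem_take hx)
    · intro i hi
      have e : (l.take (i + 1)).prod = (l.take i).prod * l[i] := by
        rw [List.prod_take_succ _ _ hi]
      simp only [e]
      rw [← mul_assoc, hg.inv_one, hw1]
      apply hM
      simpa using h2 _ (List.getElem_mem hi)
  · intro r
    obtain ⟨R, hR⟩ := hQ1 (r + 1) (by positivity)
    refine ⟨⌈R⌉₊, fun g a b a' b' ha hb ha' hb' h1 h2 h3 => ?_⟩
    refine (hR g 0 0 ⟨a, ⟨ha, g * a', ⟨a', ha', rfl⟩, ?_⟩, b, ⟨hb, g * b', ⟨b', hb', rfl⟩, ?_⟩, ?_⟩).2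
    · have : (wd X a (g * a') : ℝ) ≤ r := by exact_mod_cast h1
      change (wd X a (g * a') : ℝ) ≤ _
      linarith
    · have : (wd X b (g * b') : ℝ) ≤ r := by exact_mod_cast h2
      change (wd X b (g * b') : ℝ) ≤ _
      linarith
    · change R ≤ (wd X a b : ℝ)
      exact (Nat.le_ceil R).trans (by exact_mod_cast h3)
  · intro n
    have hfin : Finite ↥(Y0 ∪ Y0⁻¹) := hAf
    have hlf := List.finite_length_le ↥(Y0 ∪ Y0⁻¹) ⌈μ * n + c⌉₊
    refine (hlf.image (fun l => (l.map Subtype.val).prod)).subset ?_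
    rintro h ⟨hh, hn⟩
    obtain ⟨l, h1, h2, h3⟩ := wordLength_exists (S := Y0) (g := h) (by rw [hYcl]; exact hh)
    have hl2 : ∀ x ∈ l, x ∈ Y0 ∪ Y0⁻¹ := fun x hx => by simpa using h2 x hx
    refine ⟨l.attach.map fun x => ⟨x.1, hl2 x.1 x.2⟩, ?_, ?_⟩
    · simp only [Set.mem_ofPred_eq, List.length_map, List.length_attach]
      rw [h1]
      have a := hqi0 h hh
      rw [hw1] at hn
      have hn' : (wordLength X h : ℝ) ≤ n := by exact_mod_cast hn
      have b : (wordLength Y0 h : ℝ) ≤ μ * n + c := by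
        have : μ * (wordLength X h : ℝ) ≤ μ * n := by gcongr
        linarith
      exact_mod_cast b.trans (Nat.le_ceil _)
    · simp only [List.map_map]
      rw [← h3]
      congr 1
      exact List.attach_map_subtype_val l

end interface

/-- **Non-injectivity of the restriction on exact bounded cohomology.** There is a
homogeneous quasimorphism on `G` which is not a homomorphism and vanishes on each `Hᵢ`. -/
theorem exists_quasimorphism_vanishing_on_hyp_emb {G : Type*} [Group G] (X : Set G)
    (hXgen : Subgroup.closure X = ⊤) (hhyp : IsHyperbolicDist (wordDist X))
    (l : ℕ) (H : Fin l → Subgroup G)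
    (he : ∀ i, IsHypEmbFamily X (fun _ : Fin 1 => H i))
    (hinf_index : ∀ i, (H i).index = 0)
    (hsome_inf : ∃ j, ((H j : Set G)).Infinite)
    (E : Subgroup G) (hEnormal : E.Normal) (hEfin : (E : Set G).Finite)
    (hEmax : ∀ N : Subgroup G, N.Normal → (N : Set G).Finite → N ≤ E) :
    ∃ q : G → ℝ, IsHomogeneousQM q ∧ (¬ ∀ x y : G, q (x * y) = q x + q y) ∧
      ∀ i : Fin l, ∀ x ∈ H i, q x = 0 := by
  obtain ⟨Δ, hg⟩ := wd_geo hXgen hhyp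
  refine abstract_main hg H (fun i => hypEmb_of hXgen hg (he i)) (fun i htop => ?_) hsome_inf
  have := hinf_index i
  rw [htop, Subgroup.index_top] at this
  exact one_ne_zero this
end

section
/- Let G be a group generated by a finite set S such that the Cayley graph Γ(G,S) is Gromov hyperbolic, and let H be a quasiconvex subgroup of G. Then the collection {H} has finite height, finite width, and bounded packing in G. -/
open Pointwise

section Aux

variable {G : Type*} [Group G]

theorem aux_word_exists (S : Set G) (hS : Subgroup.closure S = ⊤) (g : G) :
    ∃ l : List G, l.length = wordLength S g ∧ (∀ x ∈ l, x ∈ S ∨ x⁻¹ ∈ S) ∧ l.prod = g := by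
  have hne : {n : ℕ | ∃ l : List G, l.length = n ∧ (∀ x ∈ l, x ∈ S ∨ x⁻¹ ∈ S) ∧
      l.prod = g}.Nonempty := by
    have hg : g ∈ Subgroup.closure S := by rw [hS]; trivial
    rw [← Subgroup.mem_toSubmonoid, Subgroup.closure_toSubmonoid] at hg
    obtain ⟨l, hl, hp⟩ := Submonoid.exists_list_of_mem_closure hg
    exact ⟨l.length, l, rfl, fun x hx => hl x hx, hp⟩
  exact Nat.sInf_mem hne

theorem aux_word_le (S : Set G) (l : List G) (hl : ∀ x ∈ l, x ∈ S ∨ x⁻¹ ∈ S) :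
    wordLength S l.prod ≤ l.length :=
  Nat.sInf_le ⟨l, rfl, hl, rfl⟩

theorem aux_word_one (S : Set G) : wordLength S (1 : G) = 0 := by
  have := aux_word_le S ([] : List G) (by simp)
  simpa using this

theorem aux_word_mul (S : Set G) (hS : Subgroup.closure S = ⊤) (g h : G) :
    wordLength S (g * h) ≤ wordLength S g + wordLength S h := by
  obtain ⟨l, h1, h2, h3⟩ := aux_word_exists S hS g
  obtain ⟨l', h1', h2', h3'⟩ := aux_word_exists S hS h
  have := aux_word_le S (l ++ l') (by
    intro x hx
    rcases List.mem_append.1 hx with hx | hx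
    · exact h2 x hx
    · exact h2' x hx)
  rw [List.prod_append, h3, h3', List.length_append, h1, h1'] at this
  exact this

theorem aux_word_inv_le (S : Set G) (hS : Subgroup.closure S = ⊤) (g : G) :
    wordLength S g⁻¹ ≤ wordLength S g := by
  obtain ⟨l, h1, h2, h3⟩ := aux_word_exists S hS g
  have := aux_word_le S (l.map (fun x => x⁻¹)).reverse (by
    intro x hx
    simp only [List.mem_reverse, List.mem_map] at hx
    obtain ⟨y, hy, rfl⟩ := hx
    rw [inv_inv]
    exact (h2 y hy).symm)
  rw [← List.prod_inv_reverse, h3] at this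
  simpa [h1] using this

theorem aux_d_symm (S : Set G) (hS : Subgroup.closure S = ⊤) (g h : G) :
    wordDist S g h = wordDist S h g := by
  have h1 := aux_word_inv_le S hS (g⁻¹ * h)
  have h2 := aux_word_inv_le S hS (h⁻¹ * g)
  simp only [mul_inv_rev, inv_inv] at h1 h2
  unfold wordDist
  exact_mod_cast le_antisymm h2 h1

theorem aux_d_tri (S : Set G) (hS : Subgroup.closure S = ⊤) (g h k : G) :
    wordDist S g k ≤ wordDist S g h + wordDist S h k := by
  have := aux_word_mul S hS (g⁻¹ * h) (h⁻¹ * k)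
  rw [show g⁻¹ * h * (h⁻¹ * k) = g⁻¹ * k by group] at this
  unfold wordDist
  exact_mod_cast this

theorem aux_d_left (S : Set G) (x g h : G) :
    wordDist S (x * g) (x * h) = wordDist S g h := by
  unfold wordDist
  rw [show (x * g)⁻¹ * (x * h) = g⁻¹ * h by group]

theorem aux_d_self (S : Set G) (g : G) : wordDist S g g = 0 := by
  unfold wordDist
  rw [inv_mul_cancel, aux_word_one]; simp

theorem aux_d_nonneg (S : Set G) (g h : G) : 0 ≤ wordDist S g h := by
  unfold wordDist; positivity

theorem aux_ball_finite (S : Set G) (hfin : S.Finite) (hS : Subgroup.closure S = ⊤) (n : ℕ) :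
    {g : G | wordLength S g ≤ n}.Finite := by
  have hT : (insert 1 (S ∪ S⁻¹)).Finite := (hfin.union hfin.inv).insert 1
  have key : ∀ l : List G, (∀ x ∈ l, x ∈ S ∨ x⁻¹ ∈ S) →
      l.prod ∈ (insert 1 (S ∪ S⁻¹)) ^ l.length := by
    intro l
    induction l with
    | nil => intro _; simp
    | cons a l ih =>
      intro h
      rw [List.prod_cons, List.length_cons, pow_succ']
      refine Set.mul_mem_mul ?_ (ih fun x hx => h x (List.mem_cons_of_mem _ hx))
      have := h a List.mem_cons_self
      simp only [Set.mem_insert_iff, Set.mem_union, Set.mem_inv]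
      exact Or.inr this
  have hTn : ((insert 1 (S ∪ S⁻¹)) ^ n).Finite := by
    clear key
    induction n with
    | zero => simp
    | succ n ih => rw [pow_succ]; exact Set.Finite.mul ih hT
  refine hTn.subset ?_
  intro g hg
  obtain ⟨l, h1, h2, h3⟩ := aux_word_exists S hS g
  have h4 := key l h2
  rw [h3] at h4
  refine Set.pow_subset_pow_right (Set.mem_insert _ _) ?_ h4
  rw [h1]; exact hg

theorem aux_geod (S : Set G) (hS : Subgroup.closure S = ⊤) (p a : G) :
    ∃ (n : ℕ) (γ : ℕ → G), IsGeodesic (wordDist S) n γ ∧ γ 0 = p ∧ γ n = a ∧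
      wordDist S p a = n := by
  obtain ⟨l, h1, h2, h3⟩ := aux_word_exists S hS (p⁻¹ * a)
  have hd : wordDist S p a = l.length := by unfold wordDist; rw [h1]
  have hn : p * (l.take l.length).prod = a := by rw [List.take_length, h3]; group
  have hub : ∀ i j, i ≤ j → j ≤ l.length →
      wordDist S (p * (l.take i).prod) (p * (l.take j).prod) ≤ (j : ℝ) - i := by
    intro i j hij hj
    rw [aux_d_left]
    have e : (l.take j).prod = (l.take i).prod * ((l.take j).drop i).prod := by
      rw [← List.prod_append]
      congr 1
      have := List.take_append_drop i (l.take j)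
      rw [List.take_take, min_eq_left hij] at this
      exact this.symm
    unfold wordDist
    rw [e, inv_mul_cancel_left]
    have := aux_word_le S ((l.take j).drop i) (fun x hx =>
      h2 x (List.mem_of_mem_take (List.mem_of_mem_drop hx)))
    rw [List.length_drop, List.length_take, min_eq_left hj] at this
    have h5 : ((wordLength S ((l.take j).drop i).prod : ℕ) : ℝ) ≤ ((j - i : ℕ) : ℝ) := by
      exact_mod_cast this
    rwa [Nat.cast_sub hij] at h5
  have heq : ∀ i j, i ≤ j → j ≤ l.length →
      wordDist S (p * (l.take i).prod) (p * (l.take j).prod) = (j : ℝ) - i := by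
    intro i j hij hj
    apply le_antisymm (hub i j hij hj)
    have a1 := hub 0 i (Nat.zero_le _) (hij.trans hj)
    have a2 := hub j l.length hj le_rfl
    rw [hn] at a2
    have a0 : p * (l.take 0).prod = p := by simp
    rw [a0] at a1
    have t1 := aux_d_tri S hS p (p * (l.take i).prod) a
    have t2 := aux_d_tri S hS (p * (l.take i).prod) (p * (l.take j).prod) a
    push_cast at a1
    linarith
  refine ⟨l.length, fun i => p * (l.take i).prod, ?_, by simp, hn, hd⟩
  intro i j hi hj
  rcases le_total i j with h | h
  · rw [heq i j h hj, abs_sub_comm, abs_of_nonneg]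
    have : (i : ℝ) ≤ j := by exact_mod_cast h
    linarith
  · rw [aux_d_symm S hS, heq j i h hi, abs_of_nonneg]
    have : (j : ℝ) ≤ i := by exact_mod_cast h
    linarith

/-- The quasiconvexity property of a subset. -/
def AuxQC (S : Set G) (C : ℝ) (A : Set G) : Prop :=
  ∀ (n : ℕ) (γ : ℕ → G), IsGeodesic (wordDist S) n γ →
    γ 0 ∈ A → γ n ∈ A → ∀ i ≤ n, ∃ h ∈ A, wordDist S (γ i) h ≤ C

theorem aux_mem_coset (H : Subgroup G) (g x : G) : x ∈ g • (H : Set G) ↔ g⁻¹ * x ∈ H := by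
  rw [Set.mem_smul_set_iff_inv_smul_mem]; rfl

theorem aux_qc_coset (S : Set G) (C : ℝ) (H : Subgroup G) (h : AuxQC S C (H : Set G)) (g : G) :
    AuxQC S C (g • (H : Set G)) := by
  intro n γ hγ h0 hn i hi
  rw [aux_mem_coset] at h0 hn
  obtain ⟨x, hx, hd⟩ := h n (fun i => g⁻¹ * γ i) (by
    intro i j hi hj
    rw [aux_d_left]; exact hγ i j hi hj) h0 hn i hi
  refine ⟨g * x, ?_, ?_⟩
  · rw [aux_mem_coset]; simpa using hx
  · rw [← aux_d_left S g⁻¹]; simpa using hd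

/-- A geodesic passes close to any point at which the Gromov product of the ends is small. -/
theorem aux_near (S : Set G) (hS : Subgroup.closure S = ⊤) (δ C : ℝ)
    (hyp : ∀ w x y z : G, min (gromovProd (wordDist S) w x y) (gromovProd (wordDist S) w y z) - δ
      ≤ gromovProd (wordDist S) w x z)
    (A : Set G) (hA : AuxQC S C A) (x p a : G) (hp : p ∈ A) (ha : a ∈ A) :
    ∃ h ∈ A, wordDist S x h ≤ gromovProd (wordDist S) x p a + 1 + 2 * δ + C := by
  obtain ⟨n, γ, hγ, h0, hn, hd⟩ := aux_geod S hS p a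
  have t1 := aux_d_tri S hS p x a
  have t2 := aux_d_tri S hS x p a
  have t3 := aux_d_tri S hS p a x
  have s1 := aux_d_symm S hS p x
  have s2 := aux_d_symm S hS a x
  set s : ℝ := gromovProd (wordDist S) p x a with hs
  have hs0 : 0 ≤ s := by rw [hs]; unfold gromovProd; linarith
  have hsn : s ≤ n := by rw [hs]; unfold gromovProd; linarith
  have f1 := Nat.floor_le hs0
  have f2 := Nat.lt_floor_add_one s
  set t := ⌊s⌋₊ with ht
  have htn : t ≤ n := by exact_mod_cast f1.trans hsn
  obtain ⟨h, hh, hdh⟩ := hA n γ hγ (h0 ▸ hp) (hn ▸ ha) t htn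
  refine ⟨h, hh, ?_⟩
  have g1 : wordDist S p (γ t) = t := by
    have := hγ 0 t (Nat.zero_le _) htn
    rw [h0] at this; simpa using this
  have g2 : wordDist S a (γ t) = n - t := by
    have := hγ n t le_rfl htn
    rw [hn, abs_of_nonneg (by have : (t : ℝ) ≤ n := by exact_mod_cast htn
                              linarith)] at this
    exact this
  have hy := hyp p x a (γ t)
  have e1 : gromovProd (wordDist S) p a (γ t) = t := by
    unfold gromovProd; rw [g1, g2, hd]; ring
  rw [e1, ← hs, min_eq_right f1] at hy
  have tt := aux_d_tri S hS x (γ t) h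
  unfold gromovProd at hy hs ⊢
  linarith

theorem aux_proj (S : Set G) (hS : Subgroup.closure S = ⊤) (δ C : ℝ)
    (hyp : ∀ w x y z : G, min (gromovProd (wordDist S) w x y) (gromovProd (wordDist S) w y z) - δ
      ≤ gromovProd (wordDist S) w x z)
    (A : Set G) (hA : AuxQC S C A) (x z b : G) (hz : z ∈ A) (hb : b ∈ A)
    (hmin : ∀ h ∈ A, wordDist S x z ≤ wordDist S x h) :
    gromovProd (wordDist S) z x b ≤ 1 + 2 * δ + C := by
  obtain ⟨h, hh, hd⟩ := aux_near S hS δ C hyp A hA x z b hz hb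
  have := hmin h hh
  have s1 := aux_d_symm S hS z x
  unfold gromovProd at hd ⊢
  linarith

/-- The coarse Helly property, in the form needed here. -/
theorem aux_helly (S : Set G) (hS : Subgroup.closure S = ⊤) (δ C D : ℝ) (hδ : 0 ≤ δ)
    (hC : 0 ≤ C) (hD : 0 ≤ D)
    (hyp : ∀ w x y z : G, min (gromovProd (wordDist S) w x y) (gromovProd (wordDist S) w y z) - δ
      ≤ gromovProd (wordDist S) w x z)
    (A B : Set G) (hA : AuxQC S C A) (hB : AuxQC S C B) (x z p a b : G) (hz : z ∈ A) (hb : b ∈ A)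
    (hmin : ∀ h ∈ A, wordDist S x z ≤ wordDist S x h) (hp : p ∈ B) (ha : a ∈ B)
    (hab : wordDist S a b ≤ D) (hle : wordDist S x p ≤ wordDist S x z) :
    ∃ h ∈ B, wordDist S z h ≤ 2 * (1 + 3 * δ + C + D) + 1 + 2 * δ + C := by
  have h1 := aux_proj S hS δ C hyp A hA x z b hz hb hmin
  have t1 := aux_d_tri S hS z b a
  have t2 := aux_d_tri S hS x a b
  have s0 := aux_d_symm S hS a b
  have h2 : gromovProd (wordDist S) z x a ≤ 1 + 2 * δ + C + D := by
    unfold gromovProd at h1 ⊢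
    linarith
  have h3 := hyp z x p a
  rcases le_total (gromovProd (wordDist S) z x p) (gromovProd (wordDist S) z p a) with h | h
  · rw [min_eq_left h] at h3
    refine ⟨p, hp, ?_⟩
    have s1 := aux_d_symm S hS z x
    have : gromovProd (wordDist S) z x p ≤ 1 + 3 * δ + C + D := by linarith
    unfold gromovProd at this
    linarith
  · rw [min_eq_right h] at h3
    obtain ⟨h, hh, hd⟩ := aux_near S hS δ C hyp B hB z p a hp ha
    exact ⟨h, hh, by linarith⟩

theorem aux_pack (S : Set G) (hfin : S.Finite) (hS : Subgroup.closure S = ⊤) (δ C D : ℝ)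
    (hδ : 0 ≤ δ) (hC : 0 ≤ C) (hD : 0 ≤ D)
    (hyp : ∀ w x y z : G, min (gromovProd (wordDist S) w x y) (gromovProd (wordDist S) w y z) - δ
      ≤ gromovProd (wordDist S) w x z)
    (H : Subgroup G) (hH : AuxQC S C (H : Set G)) :
    ∃ N : ℕ, ∀ (k : ℕ) (g : Fin k → G),
      (∀ i j : Fin k, i ≠ j → g i • (H : Set G) ≠ g j • (H : Set G)) →
      (∀ i j : Fin k, i ≠ j → ∃ a ∈ g i • (H : Set G), ∃ b ∈ g j • (H : Set G),
        wordDist S a b ≤ D) → k ≤ N := by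
  set R : ℝ := 2 * (1 + 3 * δ + C + D) + 1 + 2 * δ + C with hR
  have hball := aux_ball_finite S hfin hS ⌊R⌋₊
  refine ⟨{g : G | wordLength S g ≤ ⌊R⌋₊}.ncard, ?_⟩
  intro k g hne hcl
  rcases Nat.eq_zero_or_pos k with rfl | hk
  · exact Nat.zero_le _
  have hself : ∀ i, g i ∈ g i • (H : Set G) := by
    intro i; rw [aux_mem_coset]; simp
  have hex : ∀ i, ∃ p ∈ g i • (H : Set G), ∀ h ∈ g i • (H : Set G),
      wordDist S 1 p ≤ wordDist S 1 h := by
    intro i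
    obtain ⟨p, hp, hm⟩ := exists_minimal_of_wellFoundedLT
      (fun n : ℕ => ∃ h ∈ g i • (H : Set G), wordLength S ((1 : G)⁻¹ * h) = n) ⟨_, g i, hself i, rfl⟩
    obtain ⟨q, hq, rfl⟩ := hp
    refine ⟨q, hq, fun h hh => ?_⟩
    unfold wordDist
    rcases le_total (wordLength S ((1 : G)⁻¹ * h)) (wordLength S ((1 : G)⁻¹ * q)) with h1 | h1
    · exact_mod_cast hm ⟨h, hh, rfl⟩ h1
    · exact_mod_cast h1
  choose p hp hmin using hex
  have : Nonempty (Fin k) := ⟨⟨0, hk⟩⟩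
  obtain ⟨m, hm⟩ := Finite.exists_max (fun i => wordDist S 1 (p i))
  have hR0 : 0 ≤ R := by rw [hR]; linarith
  have hnear : ∀ j, ∃ h ∈ g j • (H : Set G), wordDist S (p m) h ≤ R := by
    intro j
    by_cases hj : j = m
    · subst hj
      exact ⟨p j, hp j, by rw [aux_d_self]; exact hR0⟩
    · obtain ⟨a, ha, b, hb, hab⟩ := hcl j m hj
      exact aux_helly S hS δ C D hδ hC hD hyp _ _ (aux_qc_coset S C H hH (g m))
        (aux_qc_coset S C H hH (g j)) 1 (p m) (p j) a b (hp m) hb (hmin m) (hp j) ha hab (hm j)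
  choose q hq hqd using hnear
  have hinj : Function.Injective (fun j => (p m)⁻¹ * q j) := by
    intro i j hij
    by_contra hne'
    have e : q i = q j := mul_left_cancel hij
    apply hne i j hne'
    have h1 := hq i
    have h2 := hq j
    rw [e] at h1
    rw [aux_mem_coset] at h1 h2
    ext x
    rw [aux_mem_coset, aux_mem_coset]
    have e1 : (g i)⁻¹ * x = ((g i)⁻¹ * q j) * (((g j)⁻¹ * q j)⁻¹ * ((g j)⁻¹ * x)) := by group
    rw [e1, H.mul_mem_cancel_left h1, H.mul_mem_cancel_left (H.inv_mem h2)]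
  have hsub : Set.range (fun j => (p m)⁻¹ * q j) ⊆ {g : G | wordLength S g ≤ ⌊R⌋₊} := by
    rintro _ ⟨j, rfl⟩
    exact Nat.le_floor (hqd j)
  have := Set.ncard_le_ncard hsub hball
  rw [← Set.image_univ, Set.ncard_image_of_injective _ hinj, Set.ncard_univ, Nat.card_fin] at this
  exact this

theorem aux_inter (S : Set G) (hfin : S.Finite) (hS : Subgroup.closure S = ⊤) (δ C : ℝ)
    (hδ : 0 ≤ δ)
    (hyp : ∀ w x y z : G, min (gromovProd (wordDist S) w x y) (gromovProd (wordDist S) w y z) - δ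
      ≤ gromovProd (wordDist S) w x z)
    (H : Subgroup G) (hH : AuxQC S C (H : Set G)) (u v : G)
    (hinf : ((conjSub u H : Set G) ∩ (conjSub v H : Set G)).Infinite) :
    ∃ a ∈ u • (H : Set G), ∃ b ∈ v • (H : Set G), wordDist S a b ≤ 4 * δ + 1 + 2 * C := by
  set R := wordDist S u v with hR
  have hR0 : 0 ≤ R := aux_d_nonneg S u v
  obtain ⟨L, hL⟩ := exists_nat_gt (R + 2 * δ)
  have hf : ((fun x => u * x * u⁻¹) '' {g : G | wordLength S g ≤ 2 * L}).Finite :=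
    (aux_ball_finite S hfin hS (2 * L)).image _
  obtain ⟨j, ⟨hju, hjv⟩, hjn⟩ := hinf.exists_notMem_finite hf
  have hmem : ∀ w, j ∈ (conjSub w H : Set G) → j * w ∈ w • (H : Set G) := by
    intro w hw
    obtain ⟨h, hh, rfl⟩ := hw
    rw [aux_mem_coset]
    simpa [mul_assoc] using hh
  have hself : ∀ w : G, w ∈ w • (H : Set G) := by
    intro w; rw [aux_mem_coset]; simp
  have hfar : (2 * L : ℝ) < wordDist S u (j * u) := by
    by_contra hcon
    apply hjn
    refine ⟨u⁻¹ * (j * u), ?_, by group⟩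
    push Not at hcon
    unfold wordDist at hcon
    exact_mod_cast hcon
  obtain ⟨n, γ, hγ, h0, hn, hd⟩ := aux_geod S hS u (j * u)
  rw [hd] at hfar
  have hLn : L ≤ n := by
    have : (2 * L : ℕ) < n := by exact_mod_cast hfar
    omega
  obtain ⟨a, ha, had⟩ := aux_qc_coset S C H hH u n γ hγ (h0 ▸ hself u) (hn ▸ hmem u hju) L hLn
  obtain ⟨b, hb, hbd⟩ := aux_near S hS δ C hyp _ (aux_qc_coset S C H hH v) (γ L) v (j * v)
    (hself v) (hmem v hjv)
  have g1 : wordDist S (γ L) u = L := by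
    have := hγ L 0 hLn (Nat.zero_le _)
    rw [h0] at this; simpa using this
  have g2 : wordDist S (γ L) (j * u) = n - L := by
    have := hγ L n hLn le_rfl
    rw [hn, abs_sub_comm, abs_of_nonneg (by linarith [(Nat.cast_nonneg L : (0:ℝ) ≤ L)])] at this
    exact this
  have y1 := hyp (γ L) u v (j * u)
  have y2 := hyp (γ L) v (j * v) (j * u)
  have e1 : gromovProd (wordDist S) (γ L) u (j * u) = 0 := by
    unfold gromovProd; rw [g1, g2, hd]; ring
  have e2 : L - R ≤ gromovProd (wordDist S) (γ L) u v := by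
    have := aux_d_tri S hS (γ L) v u
    have s := aux_d_symm S hS u v
    unfold gromovProd; linarith
  have e3 : L - R ≤ gromovProd (wordDist S) (γ L) (j * v) (j * u) := by
    have := aux_d_tri S hS (γ L) (j * v) (j * u)
    have s := aux_d_symm S hS u v
    have s' := aux_d_left S j v u
    unfold gromovProd; linarith
  have e4 : gromovProd (wordDist S) (γ L) v (j * v) ≤ 2 * δ := by
    by_contra hcon
    push Not at hcon
    have z2 : δ < gromovProd (wordDist S) (γ L) v (j * u) := by
      have : 2 * δ < min (gromovProd (wordDist S) (γ L) v (j * v))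
        (gromovProd (wordDist S) (γ L) (j * v) (j * u)) := lt_min hcon (by linarith)
      linarith
    have : δ < min (gromovProd (wordDist S) (γ L) u v)
        (gromovProd (wordDist S) (γ L) v (j * u)) := lt_min (by linarith) z2
    linarith
  refine ⟨a, ha, b, hb, ?_⟩
  have t := aux_d_tri S hS a (γ L) b
  have s := aux_d_symm S hS a (γ L)
  linarith

end Aux


/-- **Quasiconvex subgroups of hyperbolic groups.** A quasiconvex subgroup of a hyperbolic
group has finite height, finite width, and bounded packing. -/
theorem quasiconvex_height_width_packing {G : Type*} [Group G] (S : Set G)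
    (hSfin : S.Finite) (hSgen : Subgroup.closure S = ⊤)
    (hhyp : IsHyperbolicDist (wordDist S)) (H : Subgroup G) (hqc : IsQuasiconvex S H) :
    (∃ n : ℕ, ∀ (k : ℕ) (g : Fin k → G),
      (∀ i j : Fin k, i ≠ j → g i • (H : Set G) ≠ g j • (H : Set G)) →
      n + 1 ≤ k → (⋂ i : Fin k, (conjSub (g i) H : Set G)).Finite) ∧
    (∃ n : ℕ, ∀ (k : ℕ) (g : Fin k → G),
      (∀ i j : Fin k, i ≠ j → g i • (H : Set G) ≠ g j • (H : Set G)) →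
      (∀ i j : Fin k, i ≠ j →
        ((conjSub (g i) H : Set G) ∩ (conjSub (g j) H : Set G)).Infinite) →
      k ≤ n) ∧
    (∀ D : ℝ, 0 ≤ D → ∃ N : ℕ, ∀ g : Fin N → G,
      (∀ i j : Fin N, i ≠ j → g i • (H : Set G) ≠ g j • (H : Set G)) →
      ∃ i j : Fin N, i ≠ j ∧ D ≤ setDist S (g i • (H : Set G)) (g j • (H : Set G))) := by
  obtain ⟨δ, hδ, hyp⟩ := hhyp
  obtain ⟨C, hC, hH⟩ := hqc
  have hwidth : ∃ n : ℕ, ∀ (k : ℕ) (g : Fin k → G),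
      (∀ i j : Fin k, i ≠ j → g i • (H : Set G) ≠ g j • (H : Set G)) →
      (∀ i j : Fin k, i ≠ j →
        ((conjSub (g i) H : Set G) ∩ (conjSub (g j) H : Set G)).Infinite) →
      k ≤ n := by
    obtain ⟨N, hN⟩ := aux_pack S hSfin hSgen δ C (4 * δ + 1 + 2 * C) hδ hC (by linarith) hyp H hH
    exact ⟨N, fun k g hne hinf => hN k g hne fun i j hij =>
      aux_inter S hSfin hSgen δ C hδ hyp H hH _ _ (hinf i j hij)⟩
  refine ⟨?_, hwidth, ?_⟩
  · obtain ⟨n, hn⟩ := hwidth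
    refine ⟨n, fun k g hne hk => ?_⟩
    by_contra hcon
    have := hn k g hne fun i j _ =>
      Set.Infinite.mono (Set.subset_inter (Set.iInter_subset _ i) (Set.iInter_subset _ j)) hcon
    omega
  · intro D hD
    obtain ⟨N, hN⟩ := aux_pack S hSfin hSgen δ C D hδ hC hD hyp H hH
    refine ⟨N + 1, fun g hne => ?_⟩
    by_contra hcon
    push Not at hcon
    have := hN (N + 1) g hne fun i j hij => by
      have h1 := hcon i j hij
      unfold setDist at h1
      have hne' : {r : ℝ | ∃ a ∈ g i • (H : Set G), ∃ b ∈ g j • (H : Set G),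
          r = wordDist S a b}.Nonempty :=
        ⟨_, g i, by rw [aux_mem_coset]; simp, g j, by rw [aux_mem_coset]; simp, rfl⟩
      obtain ⟨r, ⟨a, ha, b, hb, rfl⟩, hr⟩ := exists_lt_of_csInf_lt hne' h1
      exact ⟨a, ha, b, hb, hr.le⟩
    omega
end
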